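/- arXiv:1412.7905 — 3 statements merged into one kernel-verified Lean document; each statement's English description precedes it below -/
import Mathlib

section
/- For every p > 0 let λ_1(p) ≥ … ≥ λ_d(p) be the eigenvalues of Z_p := (A^{p/2} B^p A^{p/2})^{1/p} in decreasing order with multiplicities. Then for every i = 1, …, d the limit λ_i := lim_{p→∞} λ_i(p) exists, and a_1 b_1 ≥ λ_1 ≥ λ_2 ≥ … ≥ λ_d ≥ a_d b_d. -/
open Matrix Filter Topology Finset
open scoped ComplexOrder

/-- Functional-calculus power of a (Hermitian, in practice positive semidefinite)
matrix, with the convention `0 ^ r = 0` for `r > 0`. -/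
noncomputable def psdPow {d : ℕ} (A : Matrix (Fin d) (Fin d) ℂ) (r : ℝ) :
    Matrix (Fin d) (Fin d) ℂ :=
  if hA : A.IsHermitian then
    (hA.eigenvectorUnitary : Matrix (Fin d) (Fin d) ℂ) *
      Matrix.diagonal (fun i => ((hA.eigenvalues i ^ r : ℝ) : ℂ)) *
      star (hA.eigenvectorUnitary : Matrix (Fin d) (Fin d) ℂ)
  else 0

/-- The eigenvalues of a Hermitian matrix, sorted in decreasing order
(with multiplicities). -/
noncomputable def eigsDesc {d : ℕ} (A : Matrix (Fin d) (Fin d) ℂ) : Fin d → ℝ :=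
  if hA : A.IsHermitian then
    fun i => hA.eigenvalues (Tuple.sort hA.eigenvalues i.rev)
  else 0

/-- `Zmat A B p = (A^{p/2} B^p A^{p/2})^{1/p}`. -/
noncomputable def Zmat {d : ℕ} (A B : Matrix (Fin d) (Fin d) ℂ) (p : ℝ) :
    Matrix (Fin d) (Fin d) ℂ :=
  psdPow (psdPow A (p / 2) * psdPow B p * psdPow A (p / 2)) (1 / p)

theorem psdPow_conj {d : ℕ} {A V : Matrix (Fin d) (Fin d) ℂ} {a : Fin d → ℝ}
    (hA : A.IsHermitian) (hV : V ∈ Matrix.unitaryGroup (Fin d) ℂ)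
    (hAd : A = V * Matrix.diagonal (fun i => (a i : ℂ)) * Vᴴ) (r : ℝ) :
    psdPow A r = V * Matrix.diagonal (fun i => ((a i ^ r : ℝ) : ℂ)) * Vᴴ := by
  have hV1 : Vᴴ * V = 1 := by simpa [star_eq_conjTranspose] using (Matrix.mem_unitaryGroup_iff').1 hV
  have hV2 : V * Vᴴ = 1 := by simpa [star_eq_conjTranspose] using (Matrix.mem_unitaryGroup_iff).1 hV
  rw [psdPow, dif_pos hA]
  set E : Matrix (Fin d) (Fin d) ℂ := (hA.eigenvectorUnitary : Matrix (Fin d) (Fin d) ℂ) with hE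
  have hE1 : star E * E = 1 := (Matrix.mem_unitaryGroup_iff').1 hA.eigenvectorUnitary.2
  have hE2 : E * star E = 1 := (Matrix.mem_unitaryGroup_iff).1 hA.eigenvectorUnitary.2
  have hs : A = E * Matrix.diagonal (fun i => (hA.eigenvalues i : ℂ)) * star E := by
    have := hA.spectral_theorem
    rw [Unitary.conjStarAlgAut_apply] at this
    exact this
  have key : (Vᴴ * E) * Matrix.diagonal (fun i => (hA.eigenvalues i : ℂ))
      = Matrix.diagonal (fun i => (a i : ℂ)) * (Vᴴ * E) := by
    have h1 : Vᴴ * A * E = (Vᴴ * E) * Matrix.diagonal (fun i => (hA.eigenvalues i : ℂ)) := by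
      calc Vᴴ * A * E = Vᴴ * (E * Matrix.diagonal (fun i => (hA.eigenvalues i : ℂ)) * star E) * E := by
            rw [← hs]
        _ = Vᴴ * E * Matrix.diagonal (fun i => (hA.eigenvalues i : ℂ)) * (star E * E) := by
            simp only [mul_assoc]
        _ = _ := by rw [hE1, mul_one]
    have h2 : Vᴴ * A * E = Matrix.diagonal (fun i => (a i : ℂ)) * (Vᴴ * E) := by
      calc Vᴴ * A * E = Vᴴ * (V * Matrix.diagonal (fun i => (a i : ℂ)) * Vᴴ) * E := by
            rw [← hAd]
        _ = (Vᴴ * V) * Matrix.diagonal (fun i => (a i : ℂ)) * (Vᴴ * E) := by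
            simp only [mul_assoc]
        _ = _ := by rw [hV1, one_mul]
    rw [← h1, h2]
  have key2 : (Vᴴ * E) * Matrix.diagonal (fun i => ((hA.eigenvalues i ^ r : ℝ) : ℂ))
      = Matrix.diagonal (fun i => ((a i ^ r : ℝ) : ℂ)) * (Vᴴ * E) := by
    ext i j
    have := congrFun (congrFun key i) j
    rw [Matrix.mul_diagonal, Matrix.diagonal_mul] at this ⊢
    by_cases h0 : (Vᴴ * E) i j = 0
    · simp [h0]
    · rw [mul_comm] at this
      have h3 := mul_right_cancel₀ h0 this
      have h4 : hA.eigenvalues i = hA.eigenvalues i := rfl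
      have h5 : hA.eigenvalues j = a i := by exact_mod_cast h3
      rw [h5, mul_comm]
  calc E * Matrix.diagonal (fun i => ((hA.eigenvalues i ^ r : ℝ) : ℂ)) * star E
      = V * Vᴴ * E * Matrix.diagonal (fun i => ((hA.eigenvalues i ^ r : ℝ) : ℂ)) * star E := by
        rw [hV2, one_mul]
    _ = V * ((Vᴴ * E) * Matrix.diagonal (fun i => ((hA.eigenvalues i ^ r : ℝ) : ℂ))) * star E := by
        simp only [mul_assoc]
    _ = V * Matrix.diagonal (fun i => ((a i ^ r : ℝ) : ℂ)) * Vᴴ * (E * star E) := by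
        rw [key2]; simp only [mul_assoc]
    _ = _ := by rw [hE2, mul_one]

theorem conj_diag_isHermitian {d : ℕ} (V : Matrix (Fin d) (Fin d) ℂ) (a : Fin d → ℝ) :
    (V * Matrix.diagonal (fun i => (a i : ℂ)) * Vᴴ).IsHermitian := by
  apply Matrix.isHermitian_mul_mul_conjTranspose
  rw [Matrix.isHermitian_diagonal_iff]
  intro i
  simp [IsSelfAdjoint]

theorem conj_diag_posSemidef {d : ℕ} (V : Matrix (Fin d) (Fin d) ℂ) (a : Fin d → ℝ)
    (ha : ∀ i, 0 ≤ a i) :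
    (V * Matrix.diagonal (fun i => (a i : ℂ)) * Vᴴ).PosSemidef := by
  apply Matrix.PosSemidef.mul_mul_conjTranspose_same
  rw [Matrix.posSemidef_diagonal_iff]
  intro i
  exact_mod_cast ha i

theorem eigsDesc_antitone {d : ℕ} (A : Matrix (Fin d) (Fin d) ℂ) : Antitone (eigsDesc A) := by
  unfold eigsDesc
  split_ifs with h
  · intro i j hij
    exact Tuple.monotone_sort h.eigenvalues (Fin.rev_le_rev.2 hij)
  · intro i j _; simp

theorem antitone_eq_of_map_eq {d : ℕ} {f g : Fin d → ℝ} (hf : Antitone f) (hg : Antitone g)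
    (h : Multiset.map f Finset.univ.val = Multiset.map g Finset.univ.val) : f = g := by
  rw [Fin.univ_val_map, Fin.univ_val_map, Multiset.coe_eq_coe] at h
  exact List.ofFn_injective (h.eq_of_pairwise' hf.sortedGE_ofFn.pairwise hg.sortedGE_ofFn.pairwise)

theorem eigsDesc_of_conj {d : ℕ} {X U : Matrix (Fin d) (Fin d) ℂ} {c : Fin d → ℝ}
    (hU : U ∈ Matrix.unitaryGroup (Fin d) ℂ)
    (hX : X = U * Matrix.diagonal (fun i => (c i : ℂ)) * Uᴴ)
    (σ : Equiv.Perm (Fin d)) (hc : Antitone (c ∘ σ)) :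
    eigsDesc X = c ∘ σ := by
  have hH : X.IsHermitian := hX ▸ conj_diag_isHermitian U c
  have hU1 : Uᴴ * U = 1 := by simpa [star_eq_conjTranspose] using (Matrix.mem_unitaryGroup_iff').1 hU
  apply antitone_eq_of_map_eq (eigsDesc_antitone X) hc
  have h1 : X.charpoly = ∏ i, (Polynomial.X - Polynomial.C (c i : ℂ)) := by
    rw [hX, Matrix.charpoly_mul_comm, ← mul_assoc, hU1, one_mul, Matrix.charpoly_diagonal]
  have h2 : X.charpoly.roots = Multiset.map (fun i => (c i : ℂ)) Finset.univ.val := by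
    rw [h1]
    exact Polynomial.roots_multiset_prod_X_sub_C (Multiset.map (fun i => (c i : ℂ)) Finset.univ.val) |> fun h => by
      rw [Multiset.map_map] at h; exact h
  have h3 := hH.roots_charpoly_eq_eigenvalues
  rw [h2] at h3
  have h4 : Multiset.map c Finset.univ.val = Multiset.map hH.eigenvalues Finset.univ.val := by
    have := congrArg (Multiset.map Complex.re) h3
    simpa [Multiset.map_map, Function.comp_def] using this
  have perm : ∀ (f : Fin d → ℝ) (τ : Equiv.Perm (Fin d)),
      Multiset.map (f ∘ τ) Finset.univ.val = Multiset.map f Finset.univ.val := by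
    intro f τ
    rw [← Multiset.map_map]
    congr 1
    have := Finset.map_univ_equiv τ
    exact congrArg Finset.val this
  rw [perm, h4, eigsDesc, dif_pos hH]
  exact perm hH.eigenvalues (Fin.revPerm.trans (Tuple.sort hH.eigenvalues))

theorem eigsDesc_nonneg {d : ℕ} {M : Matrix (Fin d) (Fin d) ℂ} (hM : M.PosSemidef) (i : Fin d) :
    0 ≤ eigsDesc M i := by
  rw [eigsDesc, dif_pos hM.1]
  exact hM.eigenvalues_nonneg _

theorem eigsDesc_psdPow {d : ℕ} {M : Matrix (Fin d) (Fin d) ℂ} (hM : M.PosSemidef) {r : ℝ}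
    (hr : 0 ≤ r) (i : Fin d) : eigsDesc (psdPow M r) i = eigsDesc M i ^ r := by
  have hH := hM.1
  have h := eigsDesc_of_conj (X := psdPow M r) (U := hH.eigenvectorUnitary)
    (c := fun i => hH.eigenvalues i ^ r) hH.eigenvectorUnitary.2
    (by rw [psdPow, dif_pos hH]; rfl) (Fin.revPerm.trans (Tuple.sort hH.eigenvalues)) (by
      intro i j hij
      apply Real.rpow_le_rpow (hM.eigenvalues_nonneg _) _ hr
      exact Tuple.monotone_sort hH.eigenvalues (Fin.rev_le_rev.2 hij))
  rw [h, eigsDesc, dif_pos hH]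
  rfl

theorem charpoly_eigsDesc {d : ℕ} {M : Matrix (Fin d) (Fin d) ℂ} (hM : M.IsHermitian) :
    M.charpoly = ∏ i, (Polynomial.X - Polynomial.C (eigsDesc M i : ℂ)) := by
  rw [hM.charpoly_eq, eigsDesc, dif_pos hM]
  exact (Equiv.prod_comp (Fin.revPerm.trans (Tuple.sort hM.eigenvalues))
    (fun i => (Polynomial.X - Polynomial.C (hM.eigenvalues i : ℂ)))).symm

theorem sub_conj {d : ℕ} {U : Matrix (Fin d) (Fin d) ℂ} {c : Fin d → ℝ}
    (hU : U ∈ Matrix.unitaryGroup (Fin d) ℂ) (t : ℝ) :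
    (t : ℂ) • (1 : Matrix (Fin d) (Fin d) ℂ) - U * Matrix.diagonal (fun i => (c i : ℂ)) * Uᴴ
      = U * Matrix.diagonal (fun i => ((t - c i : ℝ) : ℂ)) * Uᴴ := by
  have hU2 : U * Uᴴ = 1 := by simpa [star_eq_conjTranspose] using (Matrix.mem_unitaryGroup_iff).1 hU
  have : Matrix.diagonal (fun i => ((t - c i : ℝ) : ℂ)) =
      (t : ℂ) • (1 : Matrix (Fin d) (Fin d) ℂ) - Matrix.diagonal (fun i => (c i : ℂ)) := by
    ext i j
    by_cases h : i = j
    · subst h; simp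
    · simp [h]
  rw [this, mul_sub, sub_mul, mul_smul_comm, smul_mul_assoc, mul_one, hU2]

theorem eigsDesc_le {d : ℕ} {M : Matrix (Fin d) (Fin d) ℂ} (hM : M.IsHermitian) {t : ℝ}
    (h : ((t : ℂ) • (1 : Matrix (Fin d) (Fin d) ℂ) - M).PosSemidef) (i : Fin d) :
    eigsDesc M i ≤ t := by
  have hs : M = (hM.eigenvectorUnitary : Matrix (Fin d) (Fin d) ℂ) *
      Matrix.diagonal (fun i => (hM.eigenvalues i : ℂ)) *
      (hM.eigenvectorUnitary : Matrix (Fin d) (Fin d) ℂ)ᴴ := by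
    have := hM.spectral_theorem
    rw [Unitary.conjStarAlgAut_apply] at this
    exact this
  rw [hs, sub_conj hM.eigenvectorUnitary.2] at h
  have hu : IsUnit (hM.eigenvectorUnitary : Matrix (Fin d) (Fin d) ℂ) :=
    (Unitary.toUnits hM.eigenvectorUnitary).isUnit
  have h2 := (Matrix.IsUnit.posSemidef_star_right_conjugate_iff hu).1 h
  rw [Matrix.posSemidef_diagonal_iff] at h2
  rw [eigsDesc, dif_pos hM]
  have h3 := h2 (Tuple.sort hM.eigenvalues i.rev)
  have h4 : (0:ℝ) ≤ t - hM.eigenvalues (Tuple.sort hM.eigenvalues i.rev) := by exact_mod_cast h3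
  linarith

theorem le_eigsDesc {d : ℕ} {M : Matrix (Fin d) (Fin d) ℂ} (hM : M.IsHermitian) {t : ℝ}
    (h : (M - (t : ℂ) • (1 : Matrix (Fin d) (Fin d) ℂ)).PosSemidef) (i : Fin d) :
    t ≤ eigsDesc M i := by
  have hs : M = (hM.eigenvectorUnitary : Matrix (Fin d) (Fin d) ℂ) *
      Matrix.diagonal (fun i => (hM.eigenvalues i : ℂ)) *
      (hM.eigenvectorUnitary : Matrix (Fin d) (Fin d) ℂ)ᴴ := by
    have := hM.spectral_theorem
    rw [Unitary.conjStarAlgAut_apply] at this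
    exact this
  rw [← neg_sub, hs, sub_conj hM.eigenvectorUnitary.2, ← neg_mul, ← mul_neg,
    Matrix.diagonal_neg] at h
  have hu : IsUnit (hM.eigenvectorUnitary : Matrix (Fin d) (Fin d) ℂ) :=
    (Unitary.toUnits hM.eigenvectorUnitary).isUnit
  have h2 := (Matrix.IsUnit.posSemidef_star_right_conjugate_iff hu).1 h
  rw [Matrix.posSemidef_diagonal_iff] at h2
  rw [eigsDesc, dif_pos hM]
  have h3 := h2 (Tuple.sort hM.eigenvalues i.rev)
  have h4 : (0:ℝ) ≤ -(t - hM.eigenvalues (Tuple.sort hM.eigenvalues i.rev)) := by exact_mod_cast h3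
  linarith

/-- The power functions `p ↦ x ^ p`, `x > 0`, as a monoid homomorphism. -/
noncomputable def expHom : {x : ℝ // 0 < x} →* (ℝ → ℂ) where
  toFun x := fun p => (((x : ℝ) ^ p : ℝ) : ℂ)
  map_one' := by ext p; simp
  map_mul' x y := by
    ext p
    simp only [Positive.val_mul, Pi.mul_apply]
    rw [Real.mul_rpow x.2.le y.2.le]; push_cast; rfl

/-- Algebra of exponential sums. -/
noncomputable def expAlg : Subalgebra ℂ (ℝ → ℂ) :=
  (MonoidAlgebra.lift ℂ (ℝ → ℂ) {x : ℝ // 0 < x} expHom).range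

theorem expAlg_pow {x : ℝ} (hx : 0 < x) : (fun p : ℝ => ((x ^ p : ℝ) : ℂ)) ∈ expAlg :=
  ⟨MonoidAlgebra.of ℂ _ ⟨x, hx⟩, by
    exact MonoidAlgebra.lift_of expHom _⟩

theorem expAlg_limit {f : ℝ → ℂ} (hf : f ∈ expAlg) :
    f = 0 ∨ ∃ w : ℝ, 0 < w ∧ Tendsto (fun p : ℝ => ‖f p‖ ^ (1 / p)) atTop (𝓝 w) := by
  obtain ⟨g, hg⟩ := hf
  change MonoidAlgebra.lift ℂ (ℝ → ℂ) {x : ℝ // 0 < x} expHom g = f at hg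
  rw [MonoidAlgebra.lift_apply] at hg
  by_cases h0 : g.coeff = 0
  · left; rw [← hg, h0]; simp
  right
  have hne : g.coeff.support.Nonempty := Finsupp.support_nonempty_iff.2 h0
  obtain ⟨m, hm, hmax⟩ := Finset.exists_max_image g.coeff.support id hne
  have hm0 : (0:ℝ) < m := m.2
  have hfp : ∀ p : ℝ, f p = ∑ x ∈ g.coeff.support, g.coeff x * (((x:ℝ) ^ p : ℝ) : ℂ) := by
    intro p
    rw [← hg, Finsupp.sum, Finset.sum_apply]
    rfl
  have hfac : ∀ p : ℝ, f p = (((m:ℝ) ^ p : ℝ) : ℂ) *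
      ∑ x ∈ g.coeff.support, g.coeff x * ((((x:ℝ) / m) ^ p : ℝ) : ℂ) := by
    intro p
    rw [hfp, Finset.mul_sum]
    apply Finset.sum_congr rfl
    intro x _
    rw [Real.div_rpow x.2.le hm0.le]
    have : (((m:ℝ) ^ p : ℝ) : ℂ) ≠ 0 := by exact_mod_cast (Real.rpow_pos_of_pos hm0 p).ne'
    push_cast at this ⊢
    field_simp
  set h : ℝ → ℂ := fun p => ∑ x ∈ g.coeff.support, g.coeff x * ((((x:ℝ) / m) ^ p : ℝ) : ℂ) with hh
  have hlim : Tendsto h atTop (𝓝 (g.coeff m)) := by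
    have : g.coeff m = ∑ x ∈ g.coeff.support, if x = m then g.coeff m else 0 := by
      rw [Finset.sum_ite_eq' g.coeff.support m]; simp [hm]
    rw [this]
    apply tendsto_finsetSum
    intro x hx
    split_ifs with hxm
    · subst hxm
      simp [hm0.ne']
    · have hlt : (x:ℝ) < m := lt_of_le_of_ne (hmax x hx) (fun h => hxm (Subtype.ext h))
      have h1 : Tendsto (fun p : ℝ => ((x:ℝ) / m) ^ p) atTop (𝓝 0) :=
        tendsto_rpow_atTop_of_base_lt_one _ (by have := div_pos x.2 hm0; linarith)
          ((div_lt_one hm0).2 hlt)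
      have h2 := (Complex.continuous_ofReal.tendsto 0).comp h1
      have h3 := h2.const_mul (g.coeff x)
      simpa [Function.comp_def] using h3
  have hgm : 0 < ‖g.coeff m‖ := norm_pos_iff.2 (Finsupp.mem_support_iff.1 hm)
  refine ⟨m, hm0, ?_⟩
  have hlim2 : Tendsto (fun p : ℝ => ‖h p‖ ^ (1 / p)) atTop (𝓝 1) := by
    have := hlim.norm.rpow (tendsto_const_nhds.div_atTop tendsto_id : Tendsto (fun p : ℝ => 1 / p) atTop (𝓝 0)) (Or.inl hgm.ne')
    simpa using this
  have := hlim2.const_mul (m:ℝ)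
  rw [mul_one] at this
  refine this.congr' ?_
  filter_upwards [eventually_gt_atTop 0] with p hp
  rw [hfac p, norm_mul, Complex.norm_real, Real.norm_of_nonneg (Real.rpow_pos_of_pos hm0 p).le,
    Real.mul_rpow (Real.rpow_pos_of_pos hm0 p).le (norm_nonneg _), ← Real.rpow_mul hm0.le,
    mul_one_div_cancel hp.ne', Real.rpow_one]

theorem charpoly_coeff_mem {d : ℕ} (S : Subalgebra ℂ (ℝ → ℂ)) (M : Matrix (Fin d) (Fin d) (ℝ → ℂ))
    (hM : ∀ i j, M i j ∈ S) (k : ℕ) : M.charpoly.coeff k ∈ S := by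
  let N : Matrix (Fin d) (Fin d) S := fun i j => ⟨M i j, hM i j⟩
  have : M = N.map (S.val : S →+* (ℝ → ℂ)) := by ext; rfl
  rw [this, Matrix.charpoly_map, Polynomial.coeff_map]
  exact (N.charpoly.coeff k).2

theorem mul_mem_entries {d : ℕ} {S : Subalgebra ℂ (ℝ → ℂ)} {M N : Matrix (Fin d) (Fin d) (ℝ → ℂ)}
    (hM : ∀ i j, M i j ∈ S) (hN : ∀ i j, N i j ∈ S) (i j) : (M * N) i j ∈ S := by
  rw [Matrix.mul_apply]
  exact sum_mem fun k _ => mul_mem (hM _ _) (hN _ _)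

/-- A constant matrix as matrix of functions. -/
def constMat {d : ℕ} (V : Matrix (Fin d) (Fin d) ℂ) : Matrix (Fin d) (Fin d) (ℝ → ℂ) :=
  V.map (algebraMap ℂ (ℝ → ℂ))

/-- Diagonal matrix of powers, as matrix of functions. -/
noncomputable def diagMat {d : ℕ} (a : Fin d → ℝ) : Matrix (Fin d) (Fin d) (ℝ → ℂ) :=
  Matrix.diagonal (fun i => if 0 < a i then fun p => ((a i ^ p : ℝ) : ℂ) else 0)

theorem constMat_mem {d : ℕ} (V : Matrix (Fin d) (Fin d) ℂ) (i j) : constMat V i j ∈ expAlg :=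
  Subalgebra.algebraMap_mem _ _

theorem diagMat_mem {d : ℕ} (a : Fin d → ℝ) (i j) : diagMat a i j ∈ expAlg := by
  unfold diagMat
  rw [Matrix.diagonal_apply]
  split_ifs with h1 h2
  · exact expAlg_pow h2
  · exact zero_mem _
  · exact zero_mem _

theorem diagMat_eval {d : ℕ} {a : Fin d → ℝ} (ha : ∀ i, 0 ≤ a i) {p : ℝ} (hp : 0 < p) :
    (diagMat a).map (Pi.evalRingHom (fun _ : ℝ => ℂ) p) =
      Matrix.diagonal (fun i => ((a i ^ p : ℝ) : ℂ)) := by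
  unfold diagMat
  rw [Matrix.diagonal_map (by simp)]
  congr 1
  ext i
  by_cases h : 0 < a i
  · simp [h]
  · have : a i = 0 := le_antisymm (not_lt.1 h) (ha i)
    simp [this, Real.zero_rpow hp.ne']

theorem exists_coeff_fun {d : ℕ} {V W : Matrix (Fin d) (Fin d) ℂ} {a b : Fin d → ℝ}
    (ha : ∀ i, 0 ≤ a i) (hb : ∀ i, 0 ≤ b i) (k : ℕ) :
    ∃ f ∈ expAlg, ∀ p : ℝ, 0 < p → f p =
      ((V * Matrix.diagonal (fun i => ((a i ^ (p / 2) : ℝ) : ℂ)) * Vᴴ) *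
        (W * Matrix.diagonal (fun i => ((b i ^ p : ℝ) : ℂ)) * Wᴴ) *
        (V * Matrix.diagonal (fun i => ((a i ^ (p / 2) : ℝ) : ℂ)) * Vᴴ)).charpoly.coeff k := by
  set Q := constMat V * diagMat (fun i => Real.sqrt (a i)) * constMat Vᴴ with hQ
  set R := constMat W * diagMat b * constMat Wᴴ with hR
  have hQm : ∀ i j, Q i j ∈ expAlg :=
    mul_mem_entries (mul_mem_entries (constMat_mem _) (diagMat_mem _)) (constMat_mem _)
  have hRm : ∀ i j, R i j ∈ expAlg :=
    mul_mem_entries (mul_mem_entries (constMat_mem _) (diagMat_mem _)) (constMat_mem _)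
  refine ⟨(Q * R * Q).charpoly.coeff k, charpoly_coeff_mem _ _
    (mul_mem_entries (mul_mem_entries hQm hRm) hQm) k, ?_⟩
  intro p hp
  have hc : ∀ X : Matrix (Fin d) (Fin d) ℂ,
      (constMat X).map (Pi.evalRingHom (fun _ : ℝ => ℂ) p) = X := by
    intro X; ext i j; rfl
  have hs : (fun i => ((Real.sqrt (a i) ^ p : ℝ) : ℂ)) = fun i => ((a i ^ (p / 2) : ℝ) : ℂ) := by
    ext i
    rw [Real.sqrt_eq_rpow, ← Real.rpow_mul (ha i)]
    congr 2; ring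
  have : (Q * R * Q).map (Pi.evalRingHom (fun _ : ℝ => ℂ) p) =
      ((V * Matrix.diagonal (fun i => ((a i ^ (p / 2) : ℝ) : ℂ)) * Vᴴ) *
        (W * Matrix.diagonal (fun i => ((b i ^ p : ℝ) : ℂ)) * Wᴴ) *
        (V * Matrix.diagonal (fun i => ((a i ^ (p / 2) : ℝ) : ℂ)) * Vᴴ)) := by
    simp only [hQ, hR, Matrix.map_mul, hc, diagMat_eval hb hp,
      diagMat_eval (fun i => Real.sqrt_nonneg (a i)) hp, hs]
  rw [← this, Matrix.charpoly_map, Polynomial.coeff_map]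
  rfl

/-- product of the first `k` entries -/
noncomputable def headProd {d : ℕ} (m : Fin d → ℝ) (k : ℕ) : ℝ :=
  ∏ i ∈ Finset.univ.filter (fun i : Fin d => (i : ℕ) < k), m i

theorem headProd_succ {d : ℕ} (m : Fin d → ℝ) (i : Fin d) :
    headProd m (i + 1) = headProd m i * m i := by
  unfold headProd
  have : Finset.univ.filter (fun j : Fin d => (j : ℕ) < i + 1) =
      insert i (Finset.univ.filter (fun j : Fin d => (j : ℕ) < i)) := by
    ext j
    simp only [Finset.mem_filter, Finset.mem_univ, true_and, Finset.mem_insert, Fin.ext_iff]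
    omega
  rw [this, Finset.prod_insert (by simp), mul_comm]

theorem headProd_nonneg {d : ℕ} {m : Fin d → ℝ} (hm : ∀ i, 0 ≤ m i) (k : ℕ) : 0 ≤ headProd m k :=
  Finset.prod_nonneg fun i _ => hm i

theorem headProd_rpow {d : ℕ} {m : Fin d → ℝ} (hm : ∀ i, 0 ≤ m i) (k : ℕ) (r : ℝ) :
    headProd (fun i => m i ^ r) k = headProd m k ^ r := by
  unfold headProd
  exact Real.finsetProd_rpow _ _ (fun i _ => hm i) r

theorem card_head {d k : ℕ} (hk : k ≤ d) :
    (Finset.univ.filter (fun i : Fin d => (i : ℕ) < k)).card = k := by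
  rw [Fin.card_filter_val_lt, min_eq_right hk]

theorem prod_le_headProd {d : ℕ} {m : Fin d → ℝ} (hm : ∀ i, 0 ≤ m i) (ha : Antitone m) {k : ℕ}
    (hk : k ≤ d) (t : Finset (Fin d)) (ht : t.card = k) : ∏ i ∈ t, m i ≤ headProd m k := by
  unfold headProd
  have h1 : ∏ i ∈ t, m i = ∏ j : Fin k, m (t.orderEmbOfFin ht j) := by
    rw [← Finset.prod_image (f := m) (g := t.orderEmbOfFin ht) (s := Finset.univ)
      (fun x _ y _ h => (t.orderEmbOfFin ht).injective h)]
    rw [Finset.image_orderEmbOfFin_univ]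
  have h2 : ∏ i ∈ Finset.univ.filter (fun i : Fin d => (i : ℕ) < k), m i
      = ∏ j : Fin k, m (Fin.castLE hk j) := by
    rw [← Finset.prod_image (f := m) (g := Fin.castLE hk) (s := Finset.univ)
      (fun x _ y _ h => Fin.castLE_injective hk h)]
    congr 1
    ext i
    simp only [Finset.mem_filter, Finset.mem_univ, true_and, Finset.mem_image]
    constructor
    · intro h; exact ⟨⟨i, h⟩, rfl⟩
    · rintro ⟨j, rfl⟩; exact j.2
  rw [h1, h2]
  apply Finset.prod_le_prod (fun i _ => hm _)
  intro j _
  apply ha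
  have key : ∀ n (hn : n < k), n ≤ (t.orderEmbOfFin ht ⟨n, hn⟩ : ℕ) := by
    intro n
    induction n with
    | zero => intro _; exact Nat.zero_le _
    | succ n ih =>
      intro hn
      have h := ih (by omega)
      have hlt : t.orderEmbOfFin ht ⟨n, by omega⟩ < t.orderEmbOfFin ht ⟨n + 1, hn⟩ :=
        (t.orderEmbOfFin ht).strictMono (by simp [Fin.lt_def])
      rw [Fin.lt_def] at hlt
      omega
  rw [Fin.le_def]
  exact key j j.2

theorem coeff_bounds {d : ℕ} {m : Fin d → ℝ} (hm : ∀ i, 0 ≤ m i) (ha : Antitone m) {k : ℕ}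
    (hk : k ≤ d) :
    headProd m k ≤ ‖(∏ i, (Polynomial.X - Polynomial.C (m i : ℂ))).coeff (d - k)‖ ∧
    ‖(∏ i, (Polynomial.X - Polynomial.C (m i : ℂ))).coeff (d - k)‖ ≤
      (d.choose k : ℝ) * headProd m k := by
  have h1 : ‖(∏ i, (Polynomial.X - Polynomial.C (m i : ℂ))).coeff (d - k)‖ =
      ∑ t ∈ (Finset.univ : Finset (Fin d)).powersetCard k, ∏ i ∈ t, m i := by
    have h2 : (∏ i, (Polynomial.X - Polynomial.C (m i : ℂ))) =
        ∏ i, (Polynomial.X + Polynomial.C (-(m i : ℂ))) := by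
      apply Finset.prod_congr rfl; intro i _; rw [Polynomial.C_neg, sub_eq_add_neg]
    rw [h2, Finset.prod_X_add_C_coeff _ _ (by simp)]
    have h3 : #(Finset.univ : Finset (Fin d)) - (d - k) = k := by
      rw [Finset.card_univ, Fintype.card_fin]; omega
    rw [h3]
    have h4 : ∑ t ∈ (Finset.univ : Finset (Fin d)).powersetCard k, ∏ i ∈ t, (-(m i : ℂ)) =
        (-1) ^ k * ((∑ t ∈ (Finset.univ : Finset (Fin d)).powersetCard k, ∏ i ∈ t, m i : ℝ) : ℂ) := by
      push_cast
      rw [Finset.mul_sum]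
      apply Finset.sum_congr rfl
      intro t ht
      rw [Finset.prod_neg, (Finset.mem_powersetCard.1 ht).2]
    rw [h4, norm_mul, norm_pow, norm_neg, norm_one, one_pow, one_mul, Complex.norm_real,
      Real.norm_of_nonneg]
    exact Finset.sum_nonneg fun t _ => Finset.prod_nonneg fun i _ => hm i
  rw [h1]
  constructor
  · exact Finset.single_le_sum (f := fun t => ∏ i ∈ t, m i)
      (fun t _ => Finset.prod_nonneg fun i _ => hm i)
      (Finset.mem_powersetCard.2 ⟨Finset.subset_univ _, card_head hk⟩)
  · have := Finset.sum_le_card_nsmul ((Finset.univ : Finset (Fin d)).powersetCard k)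
      (fun t => ∏ i ∈ t, m i) (headProd m k)
      (fun t ht => prod_le_headProd hm ha hk t (Finset.mem_powersetCard.1 ht).2)
    rw [Finset.card_powersetCard, Finset.card_univ, Fintype.card_fin, nsmul_eq_mul] at this
    exact this

theorem limits_of_headProd {d : ℕ} (L : ℝ → Fin d → ℝ)
    (hant : ∀ p, 0 < p → Antitone (L p)) (hnn : ∀ p, 0 < p → ∀ i, 0 ≤ L p i)
    (h : ∀ k ≤ d, (∀ p, 0 < p → headProd (L p) k = 0) ∨
      ∃ w : ℝ, 0 < w ∧ Tendsto (fun p => headProd (L p) k) atTop (𝓝 w)) (i : Fin d) :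
    ∃ l, Tendsto (fun p => L p i) atTop (𝓝 l) := by
  rcases h i i.2.le with h0 | ⟨w, hw, hlim⟩
  · refine ⟨0, tendsto_const_nhds.congr' ?_⟩
    filter_upwards [eventually_gt_atTop 0] with p hp
    obtain ⟨j, hj, hj0⟩ := Finset.prod_eq_zero_iff.1 (h0 p hp)
    have hji : j ≤ i := by
      have := (Finset.mem_filter.1 hj).2
      exact Fin.le_def.2 this.le
    have := hant p hp hji
    rw [hj0] at this
    exact le_antisymm (hnn p hp i) this
  · have h2 : ∃ w', Tendsto (fun p => headProd (L p) (i + 1)) atTop (𝓝 w') := by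
      rcases h (i + 1) i.2 with h0 | ⟨w', _, h'⟩
      · refine ⟨0, tendsto_const_nhds.congr' ?_⟩
        filter_upwards [eventually_gt_atTop 0] with p hp
        exact (h0 p hp).symm
      · exact ⟨w', h'⟩
    obtain ⟨w', h'⟩ := h2
    refine ⟨w' / w, (h'.div hlim hw.ne').congr' ?_⟩
    filter_upwards [hlim.eventually (lt_mem_nhds hw)] with p hp
    simp only [Pi.div_apply, headProd_succ]
    field_simp

theorem headProd_dichotomy {d : ℕ} (m : ℝ → Fin d → ℝ)
    (hant : ∀ p, 0 < p → Antitone (m p)) (hnn : ∀ p, 0 < p → ∀ i, 0 ≤ m p i) {k : ℕ} (hk : k ≤ d)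
    {f : ℝ → ℂ} (hf : f ∈ expAlg)
    (hfm : ∀ p, 0 < p → f p =
      (∏ i, (Polynomial.X - Polynomial.C (m p i : ℂ))).coeff (d - k)) :
    (∀ p, 0 < p → headProd (fun i => m p i ^ (1 / p)) k = 0) ∨
      ∃ w : ℝ, 0 < w ∧ Tendsto (fun p => headProd (fun i => m p i ^ (1 / p)) k) atTop (𝓝 w) := by
  have hb : ∀ p, 0 < p → headProd (m p) k ≤ ‖f p‖ ∧ ‖f p‖ ≤ (d.choose k : ℝ) * headProd (m p) k := by
    intro p hp
    rw [hfm p hp]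
    exact coeff_bounds (hnn p hp) (hant p hp) hk
  have hC : (0 : ℝ) < d.choose k := by exact_mod_cast Nat.choose_pos hk
  rcases expAlg_limit hf with h0 | ⟨w, hw, hlim⟩
  · left
    intro p hp
    have h1 := (hb p hp).1
    rw [h0] at h1
    simp only [Pi.zero_apply, norm_zero] at h1
    rw [headProd_rpow (hnn p hp), le_antisymm h1 (headProd_nonneg (hnn p hp) k),
      Real.zero_rpow (one_div_pos.2 hp).ne']
  · right
    refine ⟨w, hw, ?_⟩
    have hc : Tendsto (fun p : ℝ => (d.choose k : ℝ) ^ (1 / p)) atTop (𝓝 1) := by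
      have := (tendsto_const_nhds (x := (d.choose k : ℝ)) (f := (atTop : Filter ℝ))).rpow
        (tendsto_const_nhds.div_atTop tendsto_id : Tendsto (fun p : ℝ => 1 / p) atTop (𝓝 0))
        (Or.inl hC.ne')
      simpa using this
    have hlow := hlim.div hc one_ne_zero
    rw [div_one] at hlow
    refine tendsto_of_tendsto_of_tendsto_of_le_of_le' hlow hlim ?_ ?_
    · filter_upwards [eventually_gt_atTop 0] with p hp
      rw [headProd_rpow (hnn p hp)]
      simp only [Pi.div_apply]
      rw [div_le_iff₀ (Real.rpow_pos_of_pos hC _), mul_comm,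
        ← Real.mul_rpow hC.le (headProd_nonneg (hnn p hp) k)]
      exact Real.rpow_le_rpow (norm_nonneg _) (hb p hp).2 (one_div_pos.2 hp).le
    · filter_upwards [eventually_gt_atTop 0] with p hp
      rw [headProd_rpow (hnn p hp)]
      exact Real.rpow_le_rpow (headProd_nonneg (hnn p hp) k) (hb p hp).1 (one_div_pos.2 hp).le

theorem conj_diag_mul {d : ℕ} {V : Matrix (Fin d) (Fin d) ℂ}
    (hV : V ∈ Matrix.unitaryGroup (Fin d) ℂ) {x y z : Fin d → ℝ} (h : ∀ i, x i * y i = z i) :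
    (V * Matrix.diagonal (fun i => (x i : ℂ)) * Vᴴ) * (V * Matrix.diagonal (fun i => (y i : ℂ)) * Vᴴ)
      = V * Matrix.diagonal (fun i => (z i : ℂ)) * Vᴴ := by
  have hV1 : Vᴴ * V = 1 := by simpa [star_eq_conjTranspose] using (Matrix.mem_unitaryGroup_iff').1 hV
  calc _ = V * Matrix.diagonal (fun i => (x i : ℂ)) * (Vᴴ * V) *
        Matrix.diagonal (fun i => (y i : ℂ)) * Vᴴ := by simp only [mul_assoc]
    _ = V * (Matrix.diagonal (fun i => (x i : ℂ)) * Matrix.diagonal (fun i => (y i : ℂ))) * Vᴴ := by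
        rw [hV1, mul_one]; simp only [mul_assoc]
    _ = _ := by
        rw [Matrix.diagonal_mul_diagonal]
        congr 3
        ext i
        exact_mod_cast h i

/-- For every `i`, the `i`-th largest eigenvalue `λ_i(p)` of
`Z_p = (A^{p/2} B^p A^{p/2})^{1/p}` converges as `p → ∞`, and the limits satisfy
`a_1 b_1 ≥ λ_1 ≥ … ≥ λ_d ≥ a_d b_d`. -/
theorem anti_lie_trotter_eigenvalue_limits_exist
    {d : ℕ} (hd : 0 < d) (A B V W : Matrix (Fin d) (Fin d) ℂ) (a b : Fin d → ℝ)
    (hA : A.PosSemidef) (hB : B.PosSemidef)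
    (hV : V ∈ Matrix.unitaryGroup (Fin d) ℂ)
    (hW : W ∈ Matrix.unitaryGroup (Fin d) ℂ)
    (ha : Antitone a) (hb : Antitone b)
    (ha0 : ∀ i, 0 ≤ a i) (hb0 : ∀ i, 0 ≤ b i)
    (hAd : A = V * Matrix.diagonal (fun i => (a i : ℂ)) * Vᴴ)
    (hBd : B = W * Matrix.diagonal (fun i => (b i : ℂ)) * Wᴴ) :
    ∃ lam : Fin d → ℝ,
      (∀ i, Tendsto (fun p : ℝ => eigsDesc (Zmat A B p) i) atTop (𝓝 (lam i))) ∧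
      Antitone lam ∧
      lam ⟨0, hd⟩ ≤ a ⟨0, hd⟩ * b ⟨0, hd⟩ ∧
      a ⟨d - 1, Nat.sub_lt hd one_pos⟩ * b ⟨d - 1, Nat.sub_lt hd one_pos⟩ ≤
        lam ⟨d - 1, Nat.sub_lt hd one_pos⟩ := by
  have hlast : ∀ i : Fin d, i ≤ ⟨d - 1, Nat.sub_lt hd one_pos⟩ := fun i =>
    Fin.le_def.2 (Nat.le_sub_one_of_lt i.2)
  have hfirst : ∀ i : Fin d, (⟨0, hd⟩ : Fin d) ≤ i := fun i => Fin.le_def.2 (Nat.zero_le _)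
  set a1 := a ⟨0, hd⟩
  set b1 := b ⟨0, hd⟩
  set ad := a ⟨d - 1, Nat.sub_lt hd one_pos⟩
  set bd := b ⟨d - 1, Nat.sub_lt hd one_pos⟩
  let M : ℝ → Matrix (Fin d) (Fin d) ℂ := fun p =>
    (V * Matrix.diagonal (fun i => ((a i ^ (p / 2) : ℝ) : ℂ)) * Vᴴ) *
        (W * Matrix.diagonal (fun i => ((b i ^ p : ℝ) : ℂ)) * Wᴴ) *
        (V * Matrix.diagonal (fun i => ((a i ^ (p / 2) : ℝ) : ℂ)) * Vᴴ)
  have hZ : ∀ p, Zmat A B p = psdPow (M p) (1 / p) := by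
    intro p
    rw [Zmat, psdPow_conj hA.1 hV hAd, psdPow_conj hB.1 hW hBd]
  have hPH : ∀ p : ℝ, (V * Matrix.diagonal (fun i => ((a i ^ (p / 2) : ℝ) : ℂ)) * Vᴴ)ᴴ =
      V * Matrix.diagonal (fun i => ((a i ^ (p / 2) : ℝ) : ℂ)) * Vᴴ := fun p =>
    conj_diag_isHermitian V (fun i => a i ^ (p / 2))
  have hconj : ∀ (p : ℝ) (X : Matrix (Fin d) (Fin d) ℂ), X.PosSemidef →
      ((V * Matrix.diagonal (fun i => ((a i ^ (p / 2) : ℝ) : ℂ)) * Vᴴ) * X *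
        (V * Matrix.diagonal (fun i => ((a i ^ (p / 2) : ℝ) : ℂ)) * Vᴴ)).PosSemidef := by
    intro p X hX
    have := hX.mul_mul_conjTranspose_same
      (V * Matrix.diagonal (fun i => ((a i ^ (p / 2) : ℝ) : ℂ)) * Vᴴ)
    rwa [hPH] at this
  have hM : ∀ p, (M p).PosSemidef := fun p =>
    hconj p _ (conj_diag_posSemidef W _ (fun i => Real.rpow_nonneg (hb0 i) p))
  have hsq : ∀ p : ℝ, 0 < p → (V * Matrix.diagonal (fun i => ((a i ^ (p / 2) : ℝ) : ℂ)) * Vᴴ) *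
      (V * Matrix.diagonal (fun i => ((a i ^ (p / 2) : ℝ) : ℂ)) * Vᴴ) =
      V * Matrix.diagonal (fun i => ((a i ^ p : ℝ) : ℂ)) * Vᴴ := by
    intro p hp
    refine conj_diag_mul (x := fun i => a i ^ (p / 2)) (y := fun i => a i ^ (p / 2))
      (z := fun i => a i ^ p) hV ?_
    intro i
    rw [← Real.rpow_add_of_nonneg (ha0 i) (by positivity) (by positivity)]
    congr 1; ring
  have hnneg : ∀ U : Matrix (Fin d) (Fin d) ℂ, U ∈ Matrix.unitaryGroup (Fin d) ℂ →
      ∀ (c : Fin d → ℝ) (t : ℝ), (∀ i, t ≤ c i) →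
      (U * Matrix.diagonal (fun i => (c i : ℂ)) * Uᴴ - (t : ℂ) • 1).PosSemidef := by
    intro U hU c t ht
    have h1 := conj_diag_posSemidef U (fun i => - (t - c i)) (fun i => by linarith [ht i])
    rw [← neg_sub, sub_conj hU]
    convert h1 using 1
    rw [← neg_mul, ← mul_neg, Matrix.diagonal_neg]
    congr 3
    ext i
    push_cast
    rfl
  have hple : ∀ U : Matrix (Fin d) (Fin d) ℂ, U ∈ Matrix.unitaryGroup (Fin d) ℂ →
      ∀ (c : Fin d → ℝ) (t : ℝ), (∀ i, c i ≤ t) →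
      ((t : ℂ) • 1 - U * Matrix.diagonal (fun i => (c i : ℂ)) * Uᴴ).PosSemidef := by
    intro U hU c t ht
    rw [sub_conj hU]
    exact conj_diag_posSemidef U (fun i => (t - c i)) (fun i => by linarith [ht i])
  have hup : ∀ p, 0 < p → ∀ i, eigsDesc (M p) i ≤ (a1 * b1) ^ p := by
    intro p hp i
    apply eigsDesc_le (hM p).1
    have h1 := hconj p _ (hple W hW (fun i => b i ^ p) (b1 ^ p)
      (fun i => Real.rpow_le_rpow (hb0 i) (hb (hfirst i)) hp.le))
    have h2 := hple V hV (fun i => a i ^ p) (a1 ^ p)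
      (fun i => Real.rpow_le_rpow (ha0 i) (ha (hfirst i)) hp.le)
    have h3 := h2.smul (a := ((b1 ^ p : ℝ) : ℂ))
      (by exact_mod_cast Real.rpow_nonneg (hb0 _) p)
    convert h1.add h3 using 1
    rw [mul_sub, sub_mul, mul_smul_comm, smul_mul_assoc, mul_one, hsq p hp, smul_sub, smul_smul,
      Real.mul_rpow (ha0 _) (hb0 _)]
    simp only [M]
    push_cast
    rw [mul_comm ((a1 ^ p : ℝ) : ℂ)] <;> abel
  have hlow : ∀ p, 0 < p → ∀ i, (ad * bd) ^ p ≤ eigsDesc (M p) i := by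
    intro p hp i
    apply le_eigsDesc (hM p).1
    have h1 := hconj p _ (hnneg W hW (fun i => b i ^ p) (bd ^ p)
      (fun i => Real.rpow_le_rpow (hb0 _) (hb (hlast i)) hp.le))
    have h2 := hnneg V hV (fun i => a i ^ p) (ad ^ p)
      (fun i => Real.rpow_le_rpow (ha0 _) (ha (hlast i)) hp.le)
    have h3 := h2.smul (a := ((bd ^ p : ℝ) : ℂ))
      (by exact_mod_cast Real.rpow_nonneg (hb0 _) p)
    convert h1.add h3 using 1
    rw [mul_sub, sub_mul, mul_smul_comm, smul_mul_assoc, mul_one, hsq p hp, smul_sub, smul_smul,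
      Real.mul_rpow (ha0 _) (hb0 _)]
    simp only [M]
    push_cast
    rw [mul_comm ((ad ^ p : ℝ) : ℂ)] <;> abel
  have hE : ∀ p, 0 < p → ∀ i, eigsDesc (Zmat A B p) i = eigsDesc (M p) i ^ (1 / p) := by
    intro p hp i
    rw [hZ, eigsDesc_psdPow (hM p) (one_div_pos.2 hp).le]
  have hlims : ∀ i, ∃ l, Tendsto (fun p : ℝ => eigsDesc (M p) i ^ (1 / p)) atTop (𝓝 l) := by
    apply limits_of_headProd (fun p i => eigsDesc (M p) i ^ (1 / p))
    · intro p hp i j hij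
      exact Real.rpow_le_rpow (eigsDesc_nonneg (hM p) j) (eigsDesc_antitone _ hij)
        (one_div_pos.2 hp).le
    · intro p hp i
      exact Real.rpow_nonneg (eigsDesc_nonneg (hM p) i) _
    · intro k hk
      obtain ⟨f, hf, hfe⟩ := exists_coeff_fun (V := V) (W := W) ha0 hb0 (d - k)
      refine headProd_dichotomy (fun p => eigsDesc (M p)) (fun p _ => eigsDesc_antitone _)
        (fun p _ => eigsDesc_nonneg (hM p)) hk hf ?_
      intro p hp
      rw [hfe p hp, ← charpoly_eigsDesc (hM p).1]
  choose lam hlam using hlims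
  refine ⟨lam, ?_, ?_, ?_, ?_⟩
  · intro i
    refine (hlam i).congr' ?_
    filter_upwards [eventually_gt_atTop 0] with p hp
    exact (hE p hp i).symm
  · intro i j hij
    refine le_of_tendsto_of_tendsto (hlam j) (hlam i) ?_
    filter_upwards [eventually_gt_atTop 0] with p hp
    exact Real.rpow_le_rpow (eigsDesc_nonneg (hM p) j) (eigsDesc_antitone _ hij)
        (one_div_pos.2 hp).le
  · refine le_of_tendsto (hlam _) ?_
    filter_upwards [eventually_gt_atTop 0] with p hp
    have := Real.rpow_le_rpow (eigsDesc_nonneg (hM p) ⟨0, hd⟩) (hup p hp ⟨0, hd⟩) (one_div_pos.2 hp).le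
    rwa [← Real.rpow_mul (mul_nonneg (ha0 _) (hb0 _)), mul_one_div_cancel hp.ne',
      Real.rpow_one] at this
  · refine ge_of_tendsto (hlam _) ?_
    filter_upwards [eventually_gt_atTop 0] with p hp
    have := Real.rpow_le_rpow (Real.rpow_nonneg (mul_nonneg (ha0 _) (hb0 _)) p)
      (hlow p hp ⟨d - 1, Nat.sub_lt hd one_pos⟩) (one_div_pos.2 hp).le
    rwa [← Real.rpow_mul (mul_nonneg (ha0 _) (hb0 _)), mul_one_div_cancel hp.ne',
      Real.rpow_one] at this
end

section
/- For every p > 0 and with u_{ik} := (V*W)_{ik}, the largest eigenvalue λ_1(p) of Z_p := (A^{p/2} B^p A^{p/2})^{1/p} satisfies both λ_1(p) ≤ d^{2/p} · max{ a_i b_k : u_{ik} ≠ 0 } and λ_1(p) ≥ ( min{ |u_{ik}|^2 : u_{ik} ≠ 0 } / d )^{1/p} · max{ a_i b_k : u_{ik} ≠ 0 }. -/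
open Matrix Filter Topology Finset
open scoped ComplexOrder

theorem aux_herm {d : ℕ} {X U : Matrix (Fin d) (Fin d) ℂ} {x : Fin d → ℝ}
    (hX : X = U * Matrix.diagonal (fun i => (x i : ℂ)) * Uᴴ) : X.IsHermitian := by
  subst hX
  apply Matrix.isHermitian_mul_mul_conjTranspose
  apply Matrix.isHermitian_diagonal_of_self_adjoint
  ext i
  simp

theorem aux_entry {d : ℕ} {X U : Matrix (Fin d) (Fin d) ℂ} {x : Fin d → ℝ}
    (hU : U ∈ Matrix.unitaryGroup (Fin d) ℂ)
    (hX : X = U * Matrix.diagonal (fun i => (x i : ℂ)) * Uᴴ) (hh : X.IsHermitian) (i j : Fin d) :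
    (hh.eigenvalues i : ℂ) * (star (hh.eigenvectorUnitary : Matrix (Fin d) (Fin d) ℂ) * U) i j
      = (star (hh.eigenvectorUnitary : Matrix (Fin d) (Fin d) ℂ) * U) i j * (x j : ℂ) := by
  have h1 : Uᴴ * U = 1 := Matrix.mem_unitaryGroup_iff'.mp hU
  have h2 : star (hh.eigenvectorUnitary : Matrix (Fin d) (Fin d) ℂ) *
      (hh.eigenvectorUnitary : Matrix (Fin d) (Fin d) ℂ) = 1 :=
    Matrix.mem_unitaryGroup_iff'.mp hh.eigenvectorUnitary.2
  have h3 : X = (hh.eigenvectorUnitary : Matrix (Fin d) (Fin d) ℂ) *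
      Matrix.diagonal (fun i => (hh.eigenvalues i : ℂ)) *
      star (hh.eigenvectorUnitary : Matrix (Fin d) (Fin d) ℂ) := by
    have := hh.spectral_theorem
    rw [Unitary.conjStarAlgAut_apply] at this
    exact this
  generalize (hh.eigenvectorUnitary : Matrix (Fin d) (Fin d) ℂ) = E at *
  generalize hh.eigenvalues = l at *
  have h4 : Matrix.diagonal (fun i => (l i : ℂ)) * (star E * U)
      = (star E * U) * Matrix.diagonal (fun i => (x i : ℂ)) := by
    calc _ = (star E * E) * Matrix.diagonal (fun i => (l i : ℂ)) * (star E * U) := by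
            rw [h2, one_mul]
      _ = star E * X * U := by rw [h3]; simp only [mul_assoc]
      _ = (star E * U) * Matrix.diagonal (fun i => (x i : ℂ)) * (Uᴴ * U) := by
            rw [hX]; simp only [mul_assoc]
      _ = _ := by rw [h1, mul_one]
  have := congrFun (congrFun h4 i) j
  rwa [Matrix.diagonal_mul, Matrix.mul_diagonal] at this

theorem aux_pow {d : ℕ} {X U : Matrix (Fin d) (Fin d) ℂ} {x : Fin d → ℝ}
    (hU : U ∈ Matrix.unitaryGroup (Fin d) ℂ)
    (hX : X = U * Matrix.diagonal (fun i => (x i : ℂ)) * Uᴴ) (r : ℝ) :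
    psdPow X r = U * Matrix.diagonal (fun i => ((x i ^ r : ℝ) : ℂ)) * Uᴴ := by
  have hh := aux_herm hX
  have he := aux_entry hU hX hh
  rw [psdPow, dif_pos hh]
  have h1 : U * Uᴴ = 1 := Matrix.mem_unitaryGroup_iff.mp hU
  have h2 : (hh.eigenvectorUnitary : Matrix (Fin d) (Fin d) ℂ) *
      star (hh.eigenvectorUnitary : Matrix (Fin d) (Fin d) ℂ) = 1 :=
    Matrix.mem_unitaryGroup_iff.mp hh.eigenvectorUnitary.2
  generalize (hh.eigenvectorUnitary : Matrix (Fin d) (Fin d) ℂ) = E at *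
  generalize hh.eigenvalues = l at *
  have h4 : Matrix.diagonal (fun i => ((l i ^ r : ℝ) : ℂ)) * (star E * U)
      = (star E * U) * Matrix.diagonal (fun i => ((x i ^ r : ℝ) : ℂ)) := by
    ext i j
    rw [Matrix.diagonal_mul, Matrix.mul_diagonal]
    by_cases hq : (star E * U) i j = 0
    · rw [hq]; simp
    · have h5 := he i j
      rw [mul_comm] at h5
      have h6 := mul_left_cancel₀ hq h5
      have h7 : l i = x j := by exact_mod_cast h6
      rw [h7, mul_comm]
  calc _ = E * (Matrix.diagonal (fun i => ((l i ^ r : ℝ) : ℂ)) * (star E * U)) * Uᴴ := by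
          have : E * (Matrix.diagonal (fun i => ((l i ^ r : ℝ) : ℂ)) * (star E * U)) * Uᴴ
            = E * Matrix.diagonal (fun i => ((l i ^ r : ℝ) : ℂ)) * star E * (U * Uᴴ) := by
              simp only [mul_assoc]
          rw [this, h1, mul_one]
    _ = (E * star E) * (U * Matrix.diagonal (fun i => ((x i ^ r : ℝ) : ℂ)) * Uᴴ) := by
          rw [h4]; simp only [mul_assoc]
    _ = _ := by rw [h2, one_mul]

theorem aux_top {d : ℕ} (hd : 0 < d) {X U : Matrix (Fin d) (Fin d) ℂ} {x : Fin d → ℝ}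
    (hU : U ∈ Matrix.unitaryGroup (Fin d) ℂ)
    (hX : X = U * Matrix.diagonal (fun i => (x i : ℂ)) * Uᴴ) :
    (∃ j, eigsDesc X ⟨0, hd⟩ = x j) ∧ ∀ j, x j ≤ eigsDesc X ⟨0, hd⟩ := by
  have hh := aux_herm hX
  have he := aux_entry hU hX hh
  rw [eigsDesc, dif_pos hh]
  have h1 : Uᴴ * U = 1 := Matrix.mem_unitaryGroup_iff'.mp hU
  have h1' : U * Uᴴ = 1 := Matrix.mem_unitaryGroup_iff.mp hU
  have h2 : (hh.eigenvectorUnitary : Matrix (Fin d) (Fin d) ℂ) *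
      star (hh.eigenvectorUnitary : Matrix (Fin d) (Fin d) ℂ) = 1 :=
    Matrix.mem_unitaryGroup_iff.mp hh.eigenvectorUnitary.2
  have h2' : star (hh.eigenvectorUnitary : Matrix (Fin d) (Fin d) ℂ) *
      (hh.eigenvectorUnitary : Matrix (Fin d) (Fin d) ℂ) = 1 :=
    Matrix.mem_unitaryGroup_iff'.mp hh.eigenvectorUnitary.2
  generalize (hh.eigenvectorUnitary : Matrix (Fin d) (Fin d) ℂ) = E at *
  generalize hh.eigenvalues = l at *
  have hQ : (star E * U) * (Uᴴ * E) = 1 := by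
    calc _ = star E * (U * Uᴴ) * E := by simp only [mul_assoc]
      _ = 1 := by rw [h1', mul_one, h2']
  have hQ' : (Uᴴ * E) * (star E * U) = 1 := by
    calc _ = Uᴴ * (E * star E) * U := by simp only [mul_assoc]
      _ = 1 := by rw [h2, mul_one, h1]
  have heq : ∀ i j, (star E * U) i j ≠ 0 → l i = x j := by
    intro i j hq
    have h5 := he i j
    rw [mul_comm] at h5
    exact_mod_cast mul_left_cancel₀ hq h5
  generalize star E * U = Q at *
  generalize Uᴴ * E = R at *
  constructor
  · set i0 := Tuple.sort l (Fin.rev ⟨0, hd⟩)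
    by_contra! hc
    have hz : ∀ j, Q i0 j = 0 := fun j => by
      by_contra hq
      exact hc j (heq i0 j hq)
    have := congrFun (congrFun hQ i0) i0
    rw [Matrix.mul_apply] at this
    simp [hz] at this
  · intro j
    obtain ⟨i, hi⟩ : ∃ i, l i = x j := by
      by_contra! hc
      have hz : ∀ i, Q i j = 0 := fun i => by
        by_contra hq
        exact hc i (heq i j hq)
      have := congrFun (congrFun hQ' j) j
      rw [Matrix.mul_apply] at this
      simp [hz] at this
    rw [← hi]
    have hm := Tuple.monotone_sort l
    have hle : (Tuple.sort l).symm i ≤ Fin.rev ⟨0, hd⟩ := by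
      rw [Fin.le_def, Fin.val_rev]
      have := ((Tuple.sort l).symm i).2
      simp only
      omega
    have := hm hle
    simpa using this

theorem aux_main {d : ℕ} (hd : 0 < d) (A B V W : Matrix (Fin d) (Fin d) ℂ) (a b : Fin d → ℝ)
    (hV : V ∈ Matrix.unitaryGroup (Fin d) ℂ)
    (hW : W ∈ Matrix.unitaryGroup (Fin d) ℂ)
    (ha0 : ∀ i, 0 ≤ a i) (hb0 : ∀ i, 0 ≤ b i)
    (hAd : A = V * Matrix.diagonal (fun i => (a i : ℂ)) * Vᴴ)
    (hBd : B = W * Matrix.diagonal (fun i => (b i : ℂ)) * Wᴴ)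
    (p : ℝ) (hp : 0 < p) :
    0 ≤ eigsDesc (Zmat A B p) ⟨0, hd⟩ ∧
    (eigsDesc (Zmat A B p) ⟨0, hd⟩) ^ p ≤
      ∑ i, ∑ k, (a i * b k) ^ p * ‖(Vᴴ * W) i k‖ ^ 2 ∧
    ∑ i, ∑ k, (a i * b k) ^ p * ‖(Vᴴ * W) i k‖ ^ 2 ≤
      d * (eigsDesc (Zmat A B p) ⟨0, hd⟩) ^ p := by
  have hA := aux_pow hV hAd (p / 2)
  have hB := aux_pow hW hBd p
  set M := psdPow A (p / 2) * psdPow B p * psdPow A (p / 2) with hM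
  have hAh : (psdPow A (p / 2))ᴴ = psdPow A (p / 2) := aux_herm hA
  have hBp : (psdPow B p).PosSemidef := by
    rw [hB]
    apply Matrix.PosSemidef.mul_mul_conjTranspose_same
    apply Matrix.PosSemidef.diagonal
    intro i
    simp only [Pi.zero_apply]
    exact_mod_cast Real.rpow_nonneg (hb0 i) p
  have hMp : M.PosSemidef := by
    have := hBp.mul_mul_conjTranspose_same (psdPow A (p / 2))
    rwa [hAh] at this
  have hh := hMp.1
  have hμ := hMp.eigenvalues_nonneg
  have hspec : M = (hh.eigenvectorUnitary : Matrix (Fin d) (Fin d) ℂ) *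
      Matrix.diagonal (fun i => (hh.eigenvalues i : ℂ)) *
      (hh.eigenvectorUnitary : Matrix (Fin d) (Fin d) ℂ)ᴴ := by
    have := hh.spectral_theorem
    rw [Unitary.conjStarAlgAut_apply] at this
    exact this
  have hZ : Zmat A B p = _ := aux_pow hh.eigenvectorUnitary.2 hspec (1 / p)
  obtain ⟨⟨j, hj⟩, hmax⟩ := aux_top hd hh.eigenvectorUnitary.2 hZ
  have htr : ∑ i, hh.eigenvalues i = ∑ i, ∑ k, (a i * b k) ^ p * ‖(Vᴴ * W) i k‖ ^ 2 := by
    have h1 : M.trace = ∑ i, (hh.eigenvalues i : ℂ) := hh.trace_eq_sum_eigenvalues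
    have hVV : Vᴴ * V = 1 := Matrix.mem_unitaryGroup_iff'.mp hV
    set Da := Matrix.diagonal (fun i => ((a i ^ (p / 2) : ℝ) : ℂ)) with hDa
    set Db := Matrix.diagonal (fun i => ((b i ^ p : ℝ) : ℂ)) with hDb
    have h2 : M.trace = (Da * (Vᴴ * W) * Db * (Vᴴ * W)ᴴ * Da).trace := by
      have : M = V * (Da * (Vᴴ * W) * Db * (Vᴴ * W)ᴴ * Da * Vᴴ) := by
        rw [hM, hA, hB, Matrix.conjTranspose_mul, Matrix.conjTranspose_conjTranspose]
        simp only [mul_assoc]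
      rw [this, Matrix.trace_mul_comm, mul_assoc _ _ V, hVV, mul_one]
    have h3 : (Da * (Vᴴ * W) * Db * (Vᴴ * W)ᴴ * Da).trace
        = ((∑ i, ∑ k, (a i * b k) ^ p * ‖(Vᴴ * W) i k‖ ^ 2 : ℝ) : ℂ) := by
      generalize Vᴴ * W = u
      rw [Matrix.trace]
      push_cast
      refine Finset.sum_congr rfl fun i _ => ?_
      rw [Matrix.diag_apply, hDa, Matrix.mul_diagonal, Matrix.mul_apply, Finset.sum_mul]
      refine Finset.sum_congr rfl fun k _ => ?_
      rw [hDb, Matrix.mul_diagonal, Matrix.diagonal_mul, Matrix.conjTranspose_apply]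
      have e1 : (a i * b k) ^ p = a i ^ (p / 2) * a i ^ (p / 2) * b k ^ p := by
        rw [Real.mul_rpow (ha0 i) (hb0 k), ← Real.rpow_add_of_nonneg (ha0 i) (by positivity)
          (by positivity), add_halves]
      have e2 : u i k * star (u i k) = ((‖u i k‖ ^ 2 : ℝ) : ℂ) := by
        have := Complex.mul_conj (u i k)
        rw [Complex.normSq_eq_norm_sq] at this
        exact this
      have e3 : (((a i * b k) ^ p * ‖u i k‖ ^ 2 : ℝ) : ℂ)
        = (a i ^ (p / 2) : ℝ) * (a i ^ (p / 2) : ℝ) * (b k ^ p : ℝ) * (u i k * star (u i k)) := by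
        rw [e1, e2]; push_cast; ring
      push_cast at e3 ⊢
      rw [e3]; ring
    rw [h2, h3] at h1
    exact_mod_cast h1.symm
  have hpow : ∀ i, (hh.eigenvalues i ^ (1 / p)) ^ p = hh.eigenvalues i := fun i => by
    rw [← Real.rpow_mul (hμ i), one_div_mul_cancel hp.ne', Real.rpow_one]
  refine ⟨?_, ?_, ?_⟩
  · rw [hj]; exact Real.rpow_nonneg (hμ j) _
  · rw [hj, hpow, ← htr]
    exact Finset.single_le_sum (fun i _ => hμ i) (Finset.mem_univ j)
  · rw [← htr]
    calc ∑ i, hh.eigenvalues i ≤ ∑ _i : Fin d, (eigsDesc (Zmat A B p) ⟨0, hd⟩) ^ p := by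
          refine Finset.sum_le_sum fun i _ => ?_
          rw [← hpow i]
          exact Real.rpow_le_rpow (Real.rpow_nonneg (hμ i) _) (hmax i) hp.le
      _ = _ := by simp

/-- Two-sided estimate for the largest eigenvalue `λ_1(p)` of
`Z_p = (A^{p/2} B^p A^{p/2})^{1/p}`:
`λ_1(p) ≤ d^{2/p} · max{a_i b_k : u_{ik} ≠ 0}` and
`λ_1(p) ≥ (min{|u_{ik}|² : u_{ik} ≠ 0} / d)^{1/p} · max{a_i b_k : u_{ik} ≠ 0}`,
where `u = V*W`. -/
theorem anti_lie_trotter_top_eigenvalue_estimates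
    {d : ℕ} (hd : 0 < d) (A B V W : Matrix (Fin d) (Fin d) ℂ) (a b : Fin d → ℝ)
    (hA : A.PosSemidef) (hB : B.PosSemidef)
    (hV : V ∈ Matrix.unitaryGroup (Fin d) ℂ)
    (hW : W ∈ Matrix.unitaryGroup (Fin d) ℂ)
    (ha : Antitone a) (hb : Antitone b)
    (ha0 : ∀ i, 0 ≤ a i) (hb0 : ∀ i, 0 ≤ b i)
    (hAd : A = V * Matrix.diagonal (fun i => (a i : ℂ)) * Vᴴ)
    (hBd : B = W * Matrix.diagonal (fun i => (b i : ℂ)) * Wᴴ)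
    (p : ℝ) (hp : 0 < p) :
    eigsDesc (Zmat A B p) ⟨0, hd⟩ ≤
      (d : ℝ) ^ (2 / p) *
        sSup {x : ℝ | ∃ i k : Fin d, (Vᴴ * W) i k ≠ 0 ∧ x = a i * b k} ∧
    (sInf {y : ℝ | ∃ i k : Fin d, (Vᴴ * W) i k ≠ 0 ∧ y = ‖(Vᴴ * W) i k‖ ^ 2} / d)
        ^ (1 / p) *
        sSup {x : ℝ | ∃ i k : Fin d, (Vᴴ * W) i k ≠ 0 ∧ x = a i * b k} ≤
      eigsDesc (Zmat A B p) ⟨0, hd⟩ := by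
  obtain ⟨h0, hup, hlo⟩ := aux_main hd A B V W a b hV hW ha0 hb0 hAd hBd p hp
  set L := eigsDesc (Zmat A B p) ⟨0, hd⟩
  have hu : Vᴴ * W ∈ Matrix.unitaryGroup (Fin d) ℂ :=
    mul_mem (Unitary.star_mem hV) hW
  generalize Vᴴ * W = u at *
  set S := {x : ℝ | ∃ i k : Fin d, u i k ≠ 0 ∧ x = a i * b k} with hS
  set T := {y : ℝ | ∃ i k : Fin d, u i k ≠ 0 ∧ y = ‖u i k‖ ^ 2} with hT
  have hnon : ∃ i k, u i k ≠ 0 := by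
    by_contra! hc
    have h1 := Matrix.mem_unitaryGroup_iff.mp hu
    have := congrFun (congrFun h1 ⟨0, hd⟩) ⟨0, hd⟩
    rw [Matrix.mul_apply] at this
    simp [hc] at this
  have hSfin : S.Finite := by
    refine (Set.finite_range (fun q : Fin d × Fin d => a q.1 * b q.2)).subset ?_
    rintro x ⟨i, k, -, rfl⟩
    exact ⟨(i, k), rfl⟩
  have hSne : S.Nonempty := by
    obtain ⟨i, k, h⟩ := hnon
    exact ⟨_, i, k, h, rfl⟩
  have hmem := hSne.csSup_mem hSfin
  have hle : ∀ i k, u i k ≠ 0 → a i * b k ≤ sSup S := fun i k h =>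
    le_csSup hSfin.bddAbove ⟨i, k, h, rfl⟩
  have hTle : ∀ i k, u i k ≠ 0 → sInf T ≤ ‖u i k‖ ^ 2 := fun i k h =>
    csInf_le ⟨0, by rintro y ⟨i, k, -, rfl⟩; positivity⟩ ⟨i, k, h, rfl⟩
  have hT0 : 0 ≤ sInf T := Real.sInf_nonneg (by rintro y ⟨i, k, -, rfl⟩; positivity)
  obtain ⟨i0, k0, hu0, hm⟩ := hmem
  have hm0 : 0 ≤ sSup S := by rw [hm]; exact mul_nonneg (ha0 _) (hb0 _)
  generalize sSup S = m at *
  generalize sInf T = c at *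
  have hd' : (0 : ℝ) < d := by exact_mod_cast hd
  have hnorm : ∀ i k, ‖u i k‖ ^ 2 ≤ 1 := fun i k =>
    pow_le_one₀ (norm_nonneg _) (entry_norm_bound_of_unitary hu i k)
  constructor
  · rw [← Real.rpow_le_rpow_iff h0 (by positivity) hp]
    rw [Real.mul_rpow (by positivity) hm0, ← Real.rpow_mul hd'.le, div_mul_cancel₀ _ hp.ne']
    refine hup.trans ?_
    calc ∑ i, ∑ k, (a i * b k) ^ p * ‖u i k‖ ^ 2 ≤ ∑ _i : Fin d, ∑ _k : Fin d, m ^ p := by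
          refine Finset.sum_le_sum fun i _ => Finset.sum_le_sum fun k _ => ?_
          by_cases h : u i k = 0
          · rw [h]; simp; positivity
          · have h1 := Real.rpow_le_rpow (mul_nonneg (ha0 i) (hb0 k)) (hle i k h) hp.le
            have h2 : 0 ≤ m ^ p := by positivity
            calc _ ≤ m ^ p * 1 := by
                  apply mul_le_mul h1 (hnorm i k) (by positivity) h2
              _ = _ := mul_one _
      _ = _ := by
        simp only [Finset.sum_const, Finset.card_univ, Fintype.card_fin, nsmul_eq_mul]
        rw [Real.rpow_two]; ring
  · have hcd : 0 ≤ c / d := by positivity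
    rw [← Real.rpow_le_rpow_iff (by positivity) h0 hp]
    rw [Real.mul_rpow (by positivity) hm0, ← Real.rpow_mul hcd, one_div_mul_cancel hp.ne',
      Real.rpow_one, div_mul_eq_mul_div, div_le_iff₀ hd', mul_comm (L ^ p)]
    refine le_trans ?_ hlo
    have hnn : ∀ i k, 0 ≤ (a i * b k) ^ p * ‖u i k‖ ^ 2 := fun i k =>
      mul_nonneg (Real.rpow_nonneg (mul_nonneg (ha0 i) (hb0 k)) _) (by positivity)
    calc c * m ^ p ≤ (a i0 * b k0) ^ p * ‖u i0 k0‖ ^ 2 := by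
          rw [← hm, mul_comm]
          exact mul_le_mul_of_nonneg_left (hTle i0 k0 hu0) (by positivity)
      _ ≤ ∑ k, (a i0 * b k) ^ p * ‖u i0 k‖ ^ 2 :=
          Finset.single_le_sum (f := fun k => (a i0 * b k) ^ p * ‖u i0 k‖ ^ 2)
            (fun k _ => hnn i0 k) (Finset.mem_univ k0)
      _ ≤ _ := Finset.single_le_sum (f := fun i => ∑ k, (a i * b k) ^ p * ‖u i k‖ ^ 2)
            (fun i _ => Finset.sum_nonneg fun k _ => hnn i k) (Finset.mem_univ i0)
end

section
/- For every pair of d×d positive semidefinite complex matrices A and B, the matrix Z_p := (A^{p/2} B^p A^{p/2})^{1/p} converges as p → ∞ to a positive semidefinite matrix. -/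
open Matrix Filter Topology Finset
open scoped ComplexOrder

open MeasureTheory

/-- Formal exponential sums. -/
abbrev ExpRing := AddMonoidAlgebra ℂ ℝ

/-- Evaluation of a formal exponential sum at `p`. -/
noncomputable def evExp (p : ℝ) : ExpRing →ₐ[ℂ] ℂ :=
  AddMonoidAlgebra.lift ℂ ℂ ℝ
    { toFun := fun c => ((Real.exp (Multiplicative.toAdd c * p) : ℝ) : ℂ)
      map_one' := by simp
      map_mul' := fun a b => by
        rw [toAdd_mul, add_mul, Real.exp_add]; push_cast; rfl }

lemma evExp_apply (p : ℝ) (f : ExpRing) :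
    evExp p f = ∑ c ∈ f.coeff.support, f.coeff c * ((Real.exp (c * p) : ℝ) : ℂ) := by
  unfold evExp
  rw [AddMonoidAlgebra.lift_apply, Finsupp.sum]
  rfl

lemma evExp_single (p c : ℝ) (a : ℂ) :
    evExp p (AddMonoidAlgebra.single c a) = a * ((Real.exp (c * p) : ℝ) : ℂ) := by
  unfold evExp
  rw [AddMonoidAlgebra.lift_single]
  rfl

lemma evExp_lead (f : ExpRing) (hf : f ≠ 0) : ∃ (c : ℝ) (a : ℂ), a ≠ 0 ∧
    Tendsto (fun p => evExp p f * ((Real.exp (-c * p) : ℝ) : ℂ)) atTop (𝓝 a) := by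
  have hs : f.coeff.support.Nonempty := by
    rw [Finsupp.support_nonempty_iff]
    intro h
    apply hf
    ext x
    simp [h]
  set c := f.coeff.support.max' hs with hc
  have hcm : c ∈ f.coeff.support := f.coeff.support.max'_mem hs
  refine ⟨c, f.coeff c, Finsupp.mem_support_iff.mp hcm, ?_⟩
  have h1 : ∀ p, evExp p f * ((Real.exp (-c * p) : ℝ) : ℂ) =
      ∑ x ∈ f.coeff.support, f.coeff x * ((Real.exp ((x - c) * p) : ℝ) : ℂ) := by
    intro p
    rw [evExp_apply, Finset.sum_mul]
    refine Finset.sum_congr rfl fun x _ => ?_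
    rw [mul_assoc, ← Complex.ofReal_mul, ← Real.exp_add]
    congr 4; ring
  simp_rw [h1]
  have h2 : f.coeff c = ∑ x ∈ f.coeff.support, if x = c then f.coeff x else 0 := by
    rw [Finset.sum_ite_eq' f.coeff.support c]
    simp [hcm]
  rw [h2]
  refine tendsto_finsetSum _ fun x hx => ?_
  split_ifs with hxc
  · simp [hxc]
  · have hlt : x < c := lt_of_le_of_ne (f.coeff.support.le_max' x hx) hxc
    have : Tendsto (fun p : ℝ => Real.exp ((x - c) * p)) atTop (𝓝 0) := by
      apply Real.tendsto_exp_atBot.comp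
      exact Tendsto.const_mul_atTop_of_neg (by linarith) tendsto_id
    have h3 := ((Complex.continuous_ofReal.tendsto 0).comp this).const_mul (f.coeff x)
    simpa using h3

lemma evExp_ratio (f g : ExpRing) (C : ℝ)
    (hb : ∀ᶠ p in atTop, ‖evExp p f / evExp p g‖ ≤ C) :
    ∃ l : ℂ, Tendsto (fun p => evExp p f / evExp p g) atTop (𝓝 l) := by
  by_cases hf : f = 0
  · exact ⟨0, by simp [hf]⟩
  by_cases hg : g = 0
  · exact ⟨0, by simp [hg]⟩
  obtain ⟨c, a, ha, hca⟩ := evExp_lead f hf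
  obtain ⟨e, b, hb0, heb⟩ := evExp_lead g hg
  have hq := hca.div heb hb0
  have key : ∀ p, evExp p f / evExp p g =
      (evExp p f * ((Real.exp (-c * p) : ℝ) : ℂ)) / (evExp p g * ((Real.exp (-e * p) : ℝ) : ℂ))
        * ((Real.exp ((c - e) * p) : ℝ) : ℂ) := by
    intro p
    have h1 : ((Real.exp ((c - e) * p) : ℝ) : ℂ) =
        ((Real.exp (-e * p) : ℝ) : ℂ) / ((Real.exp (-c * p) : ℝ) : ℂ) := by
      rw [← Complex.ofReal_div, ← Real.exp_sub]; congr 2; ring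
    have h2 : ((Real.exp (-e * p) : ℝ) : ℂ) ≠ 0 := by
      exact_mod_cast (Real.exp_pos _).ne'
    have h3 : ((Real.exp (-c * p) : ℝ) : ℂ) ≠ 0 := by
      exact_mod_cast (Real.exp_pos _).ne'
    rw [h1]
    by_cases hz : evExp p g = 0
    · simp [hz]
    · field_simp
  rcases lt_trichotomy c e with h | h | h
  · have : Tendsto (fun p : ℝ => Real.exp ((c - e) * p)) atTop (𝓝 0) := by
      apply Real.tendsto_exp_atBot.comp
      exact Tendsto.const_mul_atTop_of_neg (by linarith) tendsto_id
    have h3 := hq.mul ((Complex.continuous_ofReal.tendsto 0).comp this)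
    exact ⟨_, h3.congr fun p => (key p).symm⟩
  · refine ⟨_, hq.congr fun p => ?_⟩
    rw [key p, h]; simp
  · exfalso
    have h4 : Tendsto (fun p : ℝ => Real.exp ((c - e) * p)) atTop atTop := by
      apply Real.tendsto_exp_atTop.comp
      exact Tendsto.const_mul_atTop (by linarith) tendsto_id
    have h5 := Tendsto.pos_mul_atTop (norm_pos_iff.mpr (div_ne_zero ha hb0)) hq.norm h4
    have h6 : Tendsto (fun p => ‖evExp p f / evExp p g‖) atTop atTop := by
      refine h5.congr fun p => ?_
      rw [key p, norm_mul, Complex.norm_real, Real.norm_eq_abs, Real.abs_exp]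
      rfl
    obtain ⟨p, h7, h8⟩ := (hb.and (h6.eventually_gt_atTop C)).exists
    linarith

lemma evExp_bound (f : ExpRing) : ∃ K : ℝ, 0 < K ∧ ∀ᶠ p in atTop, ‖evExp p f‖ ≤ K ^ p := by
  by_cases hf : f = 0
  · exact ⟨1, one_pos, by simp [hf]⟩
  obtain ⟨c, a, ha, hca⟩ := evExp_lead f hf
  refine ⟨(‖a‖ + 1) * Real.exp c, by positivity, ?_⟩
  have h1 := hca.norm.eventually_lt_const (lt_add_one ‖a‖)
  filter_upwards [h1, eventually_ge_atTop 1] with p hp hp1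
  rw [norm_mul, Complex.norm_real, Real.norm_eq_abs, Real.abs_exp] at hp
  have h2 : ‖evExp p f‖ = ‖evExp p f‖ * Real.exp (-c * p) * Real.exp (c * p) := by
    rw [mul_assoc, ← Real.exp_add]; simp
  rw [h2, Real.mul_rpow (by positivity) (by positivity), ← Real.exp_mul]
  gcongr
  refine hp.le.trans ?_
  exact Real.self_le_rpow_of_one_le (by linarith [norm_nonneg a]) hp1

lemma hfun_bound {K l s p : ℝ} (hK : 0 < K) (hl : 0 ≤ l) (hlK : l ≤ K ^ p) (hs : 0 < s)
    (hp : 2 ≤ p) : l / (l + s ^ p) ≤ 2 * (1 + (s / K) ^ 2)⁻¹ := by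
  have hsp : 0 < s ^ p := Real.rpow_pos_of_pos hs p
  rcases le_total s K with h | h
  · have h1 : l / (l + s ^ p) ≤ 1 := by
      rw [div_le_one (by positivity)]; linarith
    have h2 : (s / K) ^ 2 ≤ 1 := by
      have : s / K ≤ 1 := by rwa [div_le_one hK]
      have h0 : 0 ≤ s / K := by positivity
      nlinarith
    refine h1.trans ?_
    rw [← div_eq_mul_inv, le_div_iff₀ (by positivity)]
    linarith
  · have hr : 1 ≤ s / K := by rwa [le_div_iff₀ hK, one_mul]
    have h1 : (s / K) ^ 2 ≤ (s / K) ^ p := by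
      rw [← Real.rpow_natCast]
      exact Real.rpow_le_rpow_of_exponent_le hr (by exact_mod_cast hp)
    rw [Real.div_rpow hs.le hK.le] at h1
    have hKp : 0 < K ^ p := Real.rpow_pos_of_pos hK p
    rw [le_div_iff₀ hKp] at h1
    have h2 : 1 ≤ (s / K) ^ 2 := by nlinarith
    have h3 : (s / K) ^ 2 * l ≤ s ^ p := le_trans (by gcongr) h1
    rw [← div_eq_mul_inv, div_le_div_iff₀ (by positivity) (by positivity)]
    nlinarith

lemma bound_integrable (K : ℝ) (hK : 0 < K) :
    Integrable (fun s : ℝ => 2 * (1 + (s / K) ^ 2)⁻¹) (volume.restrict (Set.Ioi 0)) := by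
  have := (integrable_inv_one_add_sq.comp_div hK.ne').const_mul 2
  exact this.restrict

lemma hfun_meas (l p : ℝ) : Measurable (fun s : ℝ => l / (l + s ^ p)) := by
  fun_prop

lemma hfun_integrable {l p : ℝ} (hl : 0 ≤ l) (hp : 2 ≤ p) :
    Integrable (fun s : ℝ => l / (l + s ^ p)) (volume.restrict (Set.Ioi 0)) := by
  have hK : 0 < (l + 1) ^ (1 / p) := by positivity
  refine (bound_integrable ((l + 1) ^ (1 / p)) hK).mono'
    (hfun_meas l p).aestronglyMeasurable ?_
  filter_upwards [ae_restrict_mem measurableSet_Ioi] with s hs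
  have hs : 0 < s := hs
  have hsp : 0 < s ^ p := Real.rpow_pos_of_pos hs p
  rw [Real.norm_eq_abs, abs_of_nonneg (by positivity)]
  refine hfun_bound hK hl ?_ hs hp
  rw [← Real.rpow_mul (by positivity), one_div_mul_cancel (by linarith), Real.rpow_one]
  linarith

/-- the normalising constant -/
noncomputable def cconst (p : ℝ) : ℝ := ∫ s in Set.Ioi (0 : ℝ), 1 / (1 + s ^ p)

lemma cconst_tendsto : Tendsto cconst atTop (𝓝 1) := by
  have h1 : (1 : ℝ) = ∫ s in Set.Ioi (0 : ℝ), Set.indicator (Set.Iio 1) (fun _ => (1 : ℝ)) s := by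
    rw [setIntegral_indicator measurableSet_Iio]
    simp [Set.Ioi_inter_Iio]
  rw [h1]
  unfold cconst
  refine tendsto_integral_filter_of_dominated_convergence
    (fun s : ℝ => 2 * (1 + (s / 1) ^ 2)⁻¹) ?_ ?_ (bound_integrable 1 one_pos) ?_
  · exact Eventually.of_forall fun p => (hfun_meas 1 p).aestronglyMeasurable
  · filter_upwards [eventually_ge_atTop 2] with p hp
    filter_upwards [ae_restrict_mem measurableSet_Ioi] with s hs
    have hs : 0 < s := hs
    have hsp : 0 < s ^ p := Real.rpow_pos_of_pos hs p
    rw [Real.norm_eq_abs, abs_of_nonneg (by positivity)]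
    exact hfun_bound one_pos zero_le_one (by simp) hs hp
  · have hne : ∀ᵐ s ∂(volume.restrict (Set.Ioi (0 : ℝ))), s ≠ 1 :=
      ae_restrict_of_ae (Measure.ae_ne volume 1)
    filter_upwards [ae_restrict_mem measurableSet_Ioi, hne] with s hs hs1
    have hs : 0 < s := hs
    rcases lt_or_gt_of_ne hs1 with h | h
    · have h2 : Tendsto (fun p : ℝ => s ^ p) atTop (𝓝 0) :=
        tendsto_rpow_atTop_of_base_lt_one s (by linarith) h
      have h3 : Tendsto (fun p : ℝ => 1 / (1 + s ^ p)) atTop (𝓝 (1 / (1 + 0))) :=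
        tendsto_const_nhds.div (tendsto_const_nhds.add h2) (by norm_num)
      simpa [Set.indicator, h] using h3
    · have h2 : Tendsto (fun p : ℝ => s ^ p) atTop atTop :=
        tendsto_rpow_atTop_of_base_gt_one s h
      have h3 : Tendsto (fun p : ℝ => 1 / (1 + s ^ p)) atTop (𝓝 0) :=
        tendsto_const_nhds.div_atTop (tendsto_atTop_add_const_left _ _ h2)
      simpa [Set.indicator, not_lt.mpr h.le] using h3

lemma hfun_integral {l p : ℝ} (hl : 0 ≤ l) (hp : 2 ≤ p) :
    ∫ s in Set.Ioi (0 : ℝ), l / (l + s ^ p) = l ^ (1 / p) * cconst p := by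
  have hp0 : p ≠ 0 := by linarith
  rcases hl.eq_or_lt with h | h
  · rw [← h]; simp [hp0]
  · set z := l ^ (1 / p) with hz
    have hzpos : 0 < z := Real.rpow_pos_of_pos h _
    have hzp : z ^ p = l := by
      rw [hz, ← Real.rpow_mul hl, one_div_mul_cancel hp0, Real.rpow_one]
    have h1 := integral_comp_mul_left_Ioi' (fun s : ℝ => l / (l + s ^ p)) 0 hzpos
    rw [mul_zero] at h1
    rw [← h1, smul_eq_mul]
    congr 1
    unfold cconst
    refine setIntegral_congr_fun measurableSet_Ioi fun s hs => ?_
    have hs : 0 < s := hs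
    have hsp : 0 < s ^ p := Real.rpow_pos_of_pos hs p
    rw [Real.mul_rpow hzpos.le hs.le, hzp]
    field_simp

/-- `U diag(f(λ)) U*` -/
noncomputable def specFun {d : ℕ} {X : Matrix (Fin d) (Fin d) ℂ} (hX : X.IsHermitian)
    (f : ℝ → ℝ) : Matrix (Fin d) (Fin d) ℂ :=
  (hX.eigenvectorUnitary : Matrix (Fin d) (Fin d) ℂ) *
      Matrix.diagonal (fun i => ((f (hX.eigenvalues i) : ℝ) : ℂ)) *
      star (hX.eigenvectorUnitary : Matrix (Fin d) (Fin d) ℂ)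

section spec
variable {d : ℕ} {X : Matrix (Fin d) (Fin d) ℂ} (hX : X.IsHermitian)

lemma psdPow_eq (r : ℝ) : psdPow X r = specFun hX (fun x => x ^ r) := by
  unfold psdPow specFun
  rw [dif_pos hX]

lemma specFun_id : specFun hX (fun x => x) = X := by
  conv_rhs => rw [hX.spectral_theorem]
  rfl

lemma specFun_mul (f g : ℝ → ℝ) :
    specFun hX f * specFun hX g = specFun hX (fun x => f x * g x) := by
  unfold specFun
  have h : star (hX.eigenvectorUnitary : Matrix (Fin d) (Fin d) ℂ) *
      (hX.eigenvectorUnitary : Matrix (Fin d) (Fin d) ℂ) = 1 :=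
    Unitary.coe_star_mul_self _
  calc _ = (hX.eigenvectorUnitary : Matrix (Fin d) (Fin d) ℂ) *
      Matrix.diagonal (fun i => ((f (hX.eigenvalues i) : ℝ) : ℂ)) *
      (star (hX.eigenvectorUnitary : Matrix (Fin d) (Fin d) ℂ) *
      (hX.eigenvectorUnitary : Matrix (Fin d) (Fin d) ℂ)) *
      Matrix.diagonal (fun i => ((g (hX.eigenvalues i) : ℝ) : ℂ)) *
      star (hX.eigenvectorUnitary : Matrix (Fin d) (Fin d) ℂ) := by
        simp only [Matrix.mul_assoc]
    _ = _ := by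
        rw [h, Matrix.mul_one, Matrix.mul_assoc _ (diagonal _) (diagonal _),
          Matrix.diagonal_mul_diagonal]
        simp

lemma specFun_one : specFun hX (fun _ => 1) = 1 := by
  unfold specFun
  have h : (hX.eigenvectorUnitary : Matrix (Fin d) (Fin d) ℂ) *
      star (hX.eigenvectorUnitary : Matrix (Fin d) (Fin d) ℂ) = 1 :=
    Unitary.coe_mul_star_self _
  simp [h]

lemma specFun_add_smul_one (t : ℝ) :
    specFun hX (fun x => x + t) = X + (t : ℂ) • (1 : Matrix (Fin d) (Fin d) ℂ) := by
  conv_rhs => rw [← specFun_id hX]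
  rw [← specFun_one hX]
  unfold specFun
  have : (Matrix.diagonal (fun i => ((hX.eigenvalues i + t : ℝ) : ℂ))) =
      Matrix.diagonal (fun i => ((hX.eigenvalues i : ℝ) : ℂ)) + (t : ℂ) • Matrix.diagonal
        (fun _ : Fin d => (((1 : ℝ)) : ℂ)) := by
    rw [← Matrix.diagonal_smul, Matrix.diagonal_add]
    congr 1; ext i; simp
  rw [this, Matrix.mul_add, Matrix.add_mul, Matrix.mul_smul, Matrix.smul_mul]

lemma specFun_congr {f g : ℝ → ℝ} (h : ∀ i, f (hX.eigenvalues i) = g (hX.eigenvalues i)) :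
    specFun hX f = specFun hX g := by
  unfold specFun
  simp only [h]

lemma specFun_apply (f : ℝ → ℝ) (i j : Fin d) : specFun hX f i j =
    ∑ k, ((hX.eigenvectorUnitary : Matrix (Fin d) (Fin d) ℂ) i k *
      star ((hX.eigenvectorUnitary : Matrix (Fin d) (Fin d) ℂ) j k)) *
      ((f (hX.eigenvalues k) : ℝ) : ℂ) := by
  unfold specFun
  rw [Matrix.mul_apply]
  refine Finset.sum_congr rfl fun k _ => ?_
  rw [Matrix.mul_diagonal, Matrix.star_apply]
  ring

lemma specFun_apply_norm_le (f : ℝ → ℝ) (i j : Fin d) (C : ℝ)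
    (hC : ∀ k, |f (hX.eigenvalues k)| ≤ C) : ‖specFun hX f i j‖ ≤ d * C := by
  rw [specFun_apply]
  refine (norm_sum_le _ _).trans ?_
  have : (d : ℝ) * C = ∑ _k : Fin d, C := by simp
  rw [this]
  refine Finset.sum_le_sum fun k _ => ?_
  rw [norm_mul, norm_mul, norm_star, Complex.norm_real, Real.norm_eq_abs]
  have h1 := entry_norm_bound_of_unitary hX.eigenvectorUnitary.2 i k
  have h2 := entry_norm_bound_of_unitary hX.eigenvectorUnitary.2 j k
  have h3 : ‖(hX.eigenvectorUnitary : Matrix (Fin d) (Fin d) ℂ) i k‖ *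
      ‖(hX.eigenvectorUnitary : Matrix (Fin d) (Fin d) ℂ) j k‖ ≤ 1 :=
    mul_le_one₀ h1 (norm_nonneg _) h2
  calc _ ≤ 1 * |f (hX.eigenvalues k)| := by gcongr
    _ ≤ C := by rw [one_mul]; exact hC k

lemma specFun_posSemidef (f : ℝ → ℝ) (hf : ∀ i, 0 ≤ f (hX.eigenvalues i)) :
    (specFun hX f).PosSemidef := by
  unfold specFun
  rw [Matrix.star_eq_conjTranspose]
  refine PosSemidef.mul_mul_conjTranspose_same (PosSemidef.diagonal ?_) _
  intro i
  simpa using hf i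

lemma resolvent_entry (hP : X.PosSemidef) {t : ℝ} (ht : 0 < t) (i j : Fin d) :
    (X * adjugate (X + (t : ℂ) • (1 : Matrix (Fin d) (Fin d) ℂ))) i j /
      det (X + (t : ℂ) • (1 : Matrix (Fin d) (Fin d) ℂ)) =
    specFun hP.1 (fun x => x / (x + t)) i j := by
  set T := X + (t : ℂ) • (1 : Matrix (Fin d) (Fin d) ℂ) with hT
  have hne : ∀ k, hP.1.eigenvalues k + t ≠ 0 := fun k => by
    have := hP.eigenvalues_nonneg k
    positivity
  have h1 : specFun hP.1 (fun x => x / (x + t)) * T = X := by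
    rw [hT, ← specFun_add_smul_one hP.1, specFun_mul]
    conv_rhs => rw [← specFun_id hP.1]
    apply specFun_congr
    intro k
    exact div_mul_cancel₀ _ (hne k)
  have h2 : specFun hP.1 (fun x => 1 / (x + t)) * T = 1 := by
    rw [hT, ← specFun_add_smul_one hP.1, specFun_mul, ← specFun_one hP.1]
    apply specFun_congr
    intro k
    exact div_mul_cancel₀ _ (hne k)
  have hdet : det T ≠ 0 := by
    intro h0
    have := congrArg det h2
    rw [det_mul, h0] at this
    simp at this
  rw [div_eq_iff hdet]
  conv_lhs => rw [← h1]
  rw [Matrix.mul_assoc, Matrix.mul_adjugate, Matrix.mul_smul, Matrix.mul_one, Matrix.smul_apply,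
    smul_eq_mul, mul_comm]

end spec

lemma psdPow_posSemidef {d : ℕ} {X : Matrix (Fin d) (Fin d) ℂ} (hX : X.PosSemidef) (r : ℝ) :
    (psdPow X r).PosSemidef := by
  rw [psdPow_eq hX.1]
  exact specFun_posSemidef _ _ fun i => Real.rpow_nonneg (hX.eigenvalues_nonneg i) _

/-- formal version of `p ↦ r ^ (p * q)` -/
noncomputable def monoExp (r q : ℝ) : ExpRing :=
  if r = 0 then 0 else AddMonoidAlgebra.single (Real.log r * q) 1

lemma evExp_monoExp {r q p : ℝ} (hr : 0 ≤ r) (hq : 0 < q) (hp : 0 < p) :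
    evExp p (monoExp r q) = ((r ^ (p * q) : ℝ) : ℂ) := by
  unfold monoExp
  split_ifs with h
  · rw [h, Real.zero_rpow (by positivity)]; simp
  · rw [evExp_single, one_mul, Real.rpow_def_of_pos (lt_of_le_of_ne hr (Ne.symm h))]
    congr 2; ring

lemma psdPow_formal {d : ℕ} {X : Matrix (Fin d) (Fin d) ℂ} (hX : X.PosSemidef) {q : ℝ}
    (hq : 0 < q) : ∃ M : Matrix (Fin d) (Fin d) ExpRing, ∀ p : ℝ, 0 < p →
      M.map (evExp p) = psdPow X (p * q) := by
  refine ⟨(hX.1.eigenvectorUnitary : Matrix (Fin d) (Fin d) ℂ).map (algebraMap ℂ ExpRing) *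
    Matrix.diagonal (fun i => monoExp (hX.1.eigenvalues i) q) *
    (star (hX.1.eigenvectorUnitary : Matrix (Fin d) (Fin d) ℂ)).map (algebraMap ℂ ExpRing), ?_⟩
  intro p hp
  have hc : ∀ N : Matrix (Fin d) (Fin d) ℂ, (N.map (algebraMap ℂ ExpRing)).map (evExp p) = N := by
    intro N
    ext i j
    simp only [Matrix.map_apply, AlgHom.commutes]
    rfl
  rw [psdPow_eq hX.1, Matrix.map_mul, Matrix.map_mul, hc, hc, Matrix.diagonal_map (map_zero _)]
  unfold specFun
  simp only [evExp_monoExp (hX.eigenvalues_nonneg _) hq hp]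

lemma formal_limit {d : ℕ} (X : ℝ → Matrix (Fin d) (Fin d) ℂ) (hX : ∀ p, (X p).PosSemidef)
    (M : Matrix (Fin d) (Fin d) ExpRing) (hM : ∀ p, 0 < p → M.map (evExp p) = X p)
    {s : ℝ} (hs : 0 < s) (i j : Fin d) :
    ∃ l : ℂ, Tendsto (fun p => specFun (hX p).1 (fun x => x / (x + s ^ p)) i j) atTop (𝓝 l) := by
  set T : Matrix (Fin d) (Fin d) ExpRing := M + (monoExp s 1) • 1 with hT
  have key : ∀ p, 0 < p → evExp p ((M * adjugate T) i j) / evExp p (det T) =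
      specFun (hX p).1 (fun x => x / (x + s ^ p)) i j := by
    intro p hp
    have hTp : T.map (evExp p) = X p + ((s ^ p : ℝ) : ℂ) • (1 : Matrix (Fin d) (Fin d) ℂ) := by
      rw [hT, Matrix.map_add _ (map_add _), hM p hp]
      congr 1
      ext a b
      simp only [Matrix.map_apply, Matrix.smul_apply, smul_eq_mul, map_mul,
        evExp_monoExp hs.le one_pos hp, mul_one]
      congr 1
      by_cases hab : a = b <;> simp [Matrix.one_apply, hab]
    rw [← resolvent_entry (hX p) (Real.rpow_pos_of_pos hs p), ← hTp]
    have h1 := AlgHom.map_det (evExp p) T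
    have h2 := AlgHom.map_adjugate (evExp p) T
    simp only [AlgHom.mapMatrix_apply] at h1 h2
    rw [h1, ← h2, ← hM p hp, ← Matrix.map_mul]
    rfl
  have hev : ∀ᶠ p in atTop, evExp p ((M * adjugate T) i j) / evExp p (det T) =
      specFun (hX p).1 (fun x => x / (x + s ^ p)) i j := by
    filter_upwards [eventually_gt_atTop 0] with p hp using key p hp
  obtain ⟨l, hl⟩ := evExp_ratio ((M * adjugate T) i j) (det T) (d * 1) (by
    filter_upwards [hev] with p hp
    rw [hp]
    apply specFun_apply_norm_le
    intro k
    have h1 := (hX p).eigenvalues_nonneg k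
    have h2 := Real.rpow_pos_of_pos hs p
    rw [abs_of_nonneg (by positivity), div_le_one (by positivity)]
    linarith)
  exact ⟨l, hl.congr' hev⟩

lemma limit_entry {d : ℕ} (X : ℝ → Matrix (Fin d) (Fin d) ℂ) (hX : ∀ p, (X p).PosSemidef)
    (M : Matrix (Fin d) (Fin d) ExpRing) (hM : ∀ p, 0 < p → M.map (evExp p) = X p)
    (i j : Fin d) :
    ∃ l : ℂ, Tendsto (fun p => psdPow (X p) (1 / p) i j) atTop (𝓝 l) := by
  obtain ⟨K, hK, hKb⟩ := evExp_bound (trace M)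
  have hlam : ∀ᶠ p in atTop, ∀ k, (hX p).1.eigenvalues k ≤ K ^ p := by
    filter_upwards [hKb, eventually_gt_atTop 0] with p hp hp0 k
    have h1 : evExp p (trace M) = trace (X p) := by
      rw [← hM p hp0]
      simp [Matrix.trace]
    rw [h1, (hX p).1.trace_eq_sum_eigenvalues] at hp
    have h2 : (hX p).1.eigenvalues k ≤ ∑ m, (hX p).1.eigenvalues m :=
      Finset.single_le_sum (fun m _ => (hX p).eigenvalues_nonneg m) (Finset.mem_univ k)
    refine h2.trans (le_trans ?_ hp)
    have h3 : (∑ m, (((hX p).1.eigenvalues m : ℝ) : ℂ)) =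
      ((∑ m, (hX p).1.eigenvalues m : ℝ) : ℂ) := by push_cast; rfl
    have h4 := congrArg norm h3
    rw [Complex.norm_real] at h4
    refine le_trans (le_abs_self _) (le_of_eq ?_)
    exact h4.symm
  have hlim : ∀ s : ℝ, ∃ l : ℂ, 0 < s →
      Tendsto (fun p => specFun (hX p).1 (fun x => x / (x + s ^ p)) i j) atTop (𝓝 l) := by
    intro s
    by_cases hs : 0 < s
    · obtain ⟨l, hl⟩ := formal_limit X hX M hM hs i j
      exact ⟨l, fun _ => hl⟩
    · exact ⟨0, fun h => absurd h hs⟩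
  choose L hL using hlim
  have hD : Tendsto (fun p => ∫ s in Set.Ioi (0 : ℝ),
      specFun (hX p).1 (fun x => x / (x + s ^ p)) i j) atTop
      (𝓝 (∫ s in Set.Ioi (0 : ℝ), L s)) := by
    refine tendsto_integral_filter_of_dominated_convergence
      (fun s : ℝ => d * (2 * (1 + (s / K) ^ 2)⁻¹)) ?_ ?_ ((bound_integrable K hK).const_mul _) ?_
    · refine Eventually.of_forall fun p => Measurable.aestronglyMeasurable ?_
      simp only [specFun_apply]
      refine Finset.measurable_sum _ fun k _ => ?_
      exact (Complex.measurable_ofReal.comp (hfun_meas _ p)).const_mul _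
    · filter_upwards [hlam, eventually_ge_atTop 2] with p hp hp2
      filter_upwards [ae_restrict_mem measurableSet_Ioi] with s hs
      have hs : 0 < s := hs
      have hsp : 0 < s ^ p := Real.rpow_pos_of_pos hs p
      apply specFun_apply_norm_le
      intro k
      have h1 := (hX p).eigenvalues_nonneg k
      rw [abs_of_nonneg (by positivity)]
      exact hfun_bound hK h1 (hp k) hs hp2
    · filter_upwards [ae_restrict_mem measurableSet_Ioi] with s hs
      exact hL s hs
  have hc := (Complex.continuous_ofReal.tendsto 1).comp cconst_tendsto
  have hq := hD.div hc (by simp)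
  refine ⟨_, hq.congr' ?_⟩
  have hcpos : ∀ᶠ p in atTop, cconst p ≠ 0 := cconst_tendsto.eventually_ne one_ne_zero
  filter_upwards [hcpos, eventually_ge_atTop 2] with p hp hp2
  have hint : ∫ s in Set.Ioi (0 : ℝ), specFun (hX p).1 (fun x => x / (x + s ^ p)) i j =
      psdPow (X p) (1 / p) i j * ((cconst p : ℝ) : ℂ) := by
    simp only [specFun_apply]
    rw [integral_finsetSum]
    · rw [psdPow_eq (hX p).1, specFun_apply, Finset.sum_mul]
      refine Finset.sum_congr rfl fun k _ => ?_
      rw [integral_const_mul, integral_complex_ofReal,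
        hfun_integral ((hX p).eigenvalues_nonneg k) hp2]
      push_cast
      ring
    · intro k _
      exact ((hfun_integrable ((hX p).eigenvalues_nonneg k) hp2).ofReal).const_mul _
  simp only [Pi.div_apply, Function.comp_apply]
  rw [hint]
  exact mul_div_cancel_right₀ _ (by exact_mod_cast hp)

lemma posSemidef_of_tendsto {d : ℕ} {Y : ℝ → Matrix (Fin d) (Fin d) ℂ}
    {Z : Matrix (Fin d) (Fin d) ℂ} (hY : ∀ p, (Y p).PosSemidef)
    (h : Tendsto Y atTop (𝓝 Z)) : Z.PosSemidef := by
  refine PosSemidef.of_dotProduct_mulVec_nonneg ?_ ?_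
  · have h1 : Tendsto (fun p => (Y p)ᴴ) atTop (𝓝 Zᴴ) :=
      (Continuous.tendsto (by fun_prop) Z).comp h
    have h2 : (fun p => (Y p)ᴴ) = Y := funext fun p => (hY p).1
    rw [h2] at h1
    exact tendsto_nhds_unique h1 h
  · intro x
    have hcont : Continuous fun W : Matrix (Fin d) (Fin d) ℂ => star x ⬝ᵥ (W *ᵥ x) := by
      fun_prop
    exact ge_of_tendsto' ((hcont.tendsto Z).comp h)
      fun p => (hY p).dotProduct_mulVec_nonneg x

/-- Anti Lie-Trotter formula, existence: for positive semidefinite `A, B`, the matrix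
`Z_p = (A^{p/2} B^p A^{p/2})^{1/p}` converges as `p → ∞` to a positive semidefinite
matrix. -/
theorem anti_lie_trotter_limit_exists
    {d : ℕ} (A B : Matrix (Fin d) (Fin d) ℂ)
    (hA : A.PosSemidef) (hB : B.PosSemidef) :
    ∃ Z : Matrix (Fin d) (Fin d) ℂ, Z.PosSemidef ∧
      Tendsto (fun p : ℝ => Zmat A B p) atTop (𝓝 Z) := by
  set X : ℝ → Matrix (Fin d) (Fin d) ℂ :=
    fun p => psdPow A (p / 2) * psdPow B p * psdPow A (p / 2) with hXdef
  have hX : ∀ p, (X p).PosSemidef := by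
    intro p
    have h1 := (psdPow_posSemidef hB p).mul_mul_conjTranspose_same (psdPow A (p / 2))
    rwa [(psdPow_posSemidef hA (p / 2)).1.eq] at h1
  obtain ⟨MA, hMA⟩ := psdPow_formal hA (q := 1 / 2) (by norm_num)
  obtain ⟨MB, hMB⟩ := psdPow_formal hB (q := 1) one_pos
  have hM : ∀ p, 0 < p → (MA * MB * MA).map (evExp p) = X p := by
    intro p hp
    rw [Matrix.map_mul, Matrix.map_mul, hMA p hp, hMB p hp, mul_one, mul_one_div]
  choose L hL using limit_entry X hX _ hM
  have hT : Tendsto (fun p : ℝ => Zmat A B p) atTop (𝓝 (Matrix.of L)) := by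
    refine tendsto_pi_nhds.mpr fun i => ?_
    refine tendsto_pi_nhds.mpr fun j => ?_
    exact hL i j
  exact ⟨_, posSemidef_of_tendsto (fun p => psdPow_posSemidef (hX p) _) hT, hT⟩
end
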